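/- Tverberg theorem for collectively unavoidable complexes: Let r = p^ν be a prime power, d ≥ 1, and set N = (r−1)(d+2) and m = N + 1. Let ⟨K_1, …, K_r⟩ be a collectively r-unavoidable family of simplicial complexes on Fin m such that each K_i is (m,k)-balanced. Then for every continuous map f : stdSimplex ℝ (Fin m) → ℝ^d there exist pairwise disjoint finsets Δ_1, …, Δ_r of Fin m with Δ_i ∈ K_i for each i and ⋂_{i=1}^r f(Face(Δ_i)) ≠ ∅. -/

import Mathlib

/-!
The proof follows the configuration space / test map scheme for the group `G = (ℤ/p)^ν` with
`r = p ^ ν` elements, whose elements serve as labels for the `r` faces to be found.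

*Topology.* The configuration space is a join of finitely many copies (the *rows*) of the discrete
space `G`; its points are systems of nonnegative weights `x i g` of total sum one, with at most one
nonzero weight in each row `i`. The theorem `join_borsuk_ulam` says that on the join of
`2 (p ^ ν - 1) n + 1` rows any `n` continuous equivariant maps to `ℂ[G]` are constant functions on
`G` at some common point. Decomposing into Fourier coefficients, it is a statement about
`(p ^ ν - 1) n` complex functions, each transforming by a nontrivial character: they have a common
zero (`exists_common_zero`). This is proved with simplicial chains made of lists of points, in place
of singular homology. The join of `N + 1` copies of `G` is `(N - 1)`-connected, so the tensor power
of the periodic resolution of `ℤ` over `ℤ[ℤ/p]` maps to its chains equivariantly up to degree `N`;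
such a map is called a *system* here, and by barycentric subdivision it may be composed of
arbitrarily small simplices (`exists_small_system`). A choice of labels maps the join equivariantly
to `G`, and pulls back the Bockstein class of each character `a`. On the one hand, the product of
the Bocksteins of nonzero characters `a` is represented by the product of the quadratic forms
`∑ i, a i * X i ^ 2` modulo `p`, which is nonzero; hence the cup product of the cocycles, altered by
any invariant coboundaries, does not vanish on a system (`exists_cup_ne_zero`). On the other hand,
a function that transforms by the character `a` and has no zero on a small simplex trivialises the
Bockstein of `a` there: the angle of the function gives an integral cochain `kap` whose coboundary
is minus the Bockstein cocycle. Without a common zero, some factor of the altered cup product would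
vanish on every small simplex, a contradiction.

*Combinatorics.* The `m` vertices of the simplex are the first `m` rows, so that a point of the
join encodes `r` weighted points with disjoint supports. The supports have to be distributed
among `K 1, …, K r`. For this, `exists_test` provides a continuous equivariant function to `ℝ[G]`
that is constant only if the supports, in some order, belong to `K 1, …, K r`. It is a sum over
tuples `A` of superlevel sets of the weights, each contributing to the labels in `lab A`: the
labels of the sets with more than `k + 1` elements or, if there are none, of the sets with exactly
`k + 1` elements at which
a matching of the sets to the complexes gets stuck. Superlevel sets form a chain, and for a chain
Hall's marriage theorem and collective unavoidability show that some label is never used.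

*Assembly.* Equality of the total weights, of the test function and of the `d` coordinates of `f`
(extended to all of `ℝ^m` by Tietze) makes `d + 2` real equivariant functions, which are used as
the real parts of `n = d + 2` complex ones. This needs `2 (r - 1) (d + 2) + 1` rows, of which
the vertices provide `(r - 1) (d + 2) + 1`. The remaining `(r - 1) (d + 2)` rows are auxiliary; the
imaginary parts are the sums of the weights of `r - 1` auxiliary rows each. As `r - 1` rows cannot
use all `r` labels, these sums are constant only if they vanish, so the auxiliary rows carry no
weight at the point found.
-/

/-- `K` is an abstract simplicial complex on `Fin m`. -/
def IsSimplicialComplex {m : ℕ} (K : Set (Finset (Fin m))) : Prop :=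
  ∀ A ∈ K, ∀ B ⊆ A, B ∈ K

/-- `A` is rainbow w.r.t. the coloring `c`: `c` is injective on `A`. -/
def IsRainbow {m k : ℕ} (c : Fin m → Fin (k + 1)) (A : Finset (Fin m)) : Prop :=
  Set.InjOn c ↑A

/-- `K` is `(m,k)`-rainbow balanced w.r.t. `c`. -/
def IsRainbowBalanced {m k : ℕ} (c : Fin m → Fin (k + 1)) (K : Set (Finset (Fin m))) : Prop :=
  (∀ A : Finset (Fin m), IsRainbow c A → A.card ≤ k → A ∈ K) ∧ ∀ A ∈ K, IsRainbow c A

/-- `K` is `(m,k)`-balanced. -/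
def IsBalanced {m : ℕ} (k : ℕ) (K : Set (Finset (Fin m))) : Prop :=
  (∀ A : Finset (Fin m), A.card ≤ k → A ∈ K) ∧ ∀ A ∈ K, A.card ≤ k + 1

/-- The family `K` is collectively `(r,s)`-unavoidable. -/
def CollectivelyUnavoidable {m : ℕ} (r s : ℕ) (K : Fin r → Set (Finset (Fin m))) : Prop :=
  ∀ A : Fin r → Finset (Fin m), (∀ i j, i ≠ j → Disjoint (A i) (A j)) →
    ∃ I : Finset (Fin r), I.card = s ∧ ∀ i ∈ I, A i ∈ K i

/-- The family `K` is collectively `(r,s)`-rainbow unavoidable w.r.t. `c`. -/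
def CollectivelyRainbowUnavoidable {m k : ℕ} (c : Fin m → Fin (k + 1)) (r s : ℕ)
    (K : Fin r → Set (Finset (Fin m))) : Prop :=
  ∀ A : Fin r → Finset (Fin m), (∀ i j, i ≠ j → Disjoint (A i) (A j)) →
    (∀ i, IsRainbow c (A i)) →
    ∃ I : Finset (Fin r), I.card = s ∧ ∀ i ∈ I, A i ∈ K i

/-- The face of the standard simplex spanned by the vertex set `A`. -/
def simplexFace {m : ℕ} (A : Finset (Fin m)) : Set (stdSimplex ℝ (Fin m)) :=
  {x | Function.support (x : Fin m → ℝ) ⊆ ↑A}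

/-- The family `K` is collectively `r`-unavoidable. -/
def CollectivelyRUnavoidable {m : ℕ} (r : ℕ) (K : Fin r → Set (Finset (Fin m))) : Prop :=
  ∀ A : Fin r → Finset (Fin m), (∀ i j, i ≠ j → Disjoint (A i) (A j)) →
    ∃ i, A i ∈ K i

/-! ### Chains on lists of points, cap and cup products -/

namespace Tverberg

/-- Integral chains on finite sequences of points of `α`. A list of length `k + 1` is an ordered
`k`-simplex and the empty list is the augmentation cell in degree `-1`. -/
abbrev Chain (α : Type*) := List α →₀ ℤ

section chains

variable {α β : Type*}

/-- Linear extension of a map defined on lists. -/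
noncomputable abbrev lin {M : Type*} [AddCommGroup M] (f : List α → M) : Chain α →ₗ[ℤ] M :=
  Finsupp.linearCombination ℤ f

/-- The basis chain of a list. -/
noncomputable def bs (l : List α) : Chain α := Finsupp.single l 1

@[simp] lemma lin_bs {M : Type*} [AddCommGroup M] (f : List α → M) (l : List α) :
    lin f (bs l) = f l := by simp [lin, bs]

lemma hom_ext {M : Type*} [AddCommGroup M] {f g : Chain α →ₗ[ℤ] M}
    (h : ∀ l, f (bs l) = g (bs l)) : f = g := by
  apply Finsupp.lhom_ext'
  intro l
  ext
  simpa [bs] using h l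

/-- The cone operator: prepend the point `x`. -/
noncomputable def cone (x : α) : Chain α →ₗ[ℤ] Chain α := lin fun l => bs (x :: l)

@[simp] lemma cone_bs (x : α) (l : List α) : cone x (bs l) = bs (x :: l) := by simp [cone]

/-- The boundary of a basis list. -/
noncomputable def bdL : List α → Chain α
  | [] => 0
  | x :: l => bs l - cone x (bdL l)

/-- The augmented simplicial boundary operator. -/
noncomputable def bd : Chain α →ₗ[ℤ] Chain α := lin bdL

@[simp] lemma bd_nil : bd (bs ([] : List α)) = 0 := by simp [bd, bdL]

lemma bd_bs (l : List α) : bd (bs l) = bdL l := by simp [bd]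

@[simp] lemma bd_cons (x : α) (l : List α) :
    bd (bs (x :: l)) = bs l - cone x (bd (bs l)) := by simp [bd, bdL]

lemma bd_cone (x : α) (c : Chain α) : bd (cone x c) = c - cone x (bd c) := by
  have : bd ∘ₗ cone x = LinearMap.id - cone x ∘ₗ bd := hom_ext fun l => by simp
  exact LinearMap.congr_fun this c

lemma bd_bd (c : Chain α) : bd (bd c) = 0 := by
  have : (bd ∘ₗ bd : Chain α →ₗ[ℤ] Chain α) = 0 := hom_ext fun l => by
    induction l with
    | nil => simp
    | cons x l ih =>
      simp only [LinearMap.comp_apply, LinearMap.zero_apply] at ih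
      simp [bd_cone, ih]
  exact LinearMap.congr_fun this c

/-- The chain map induced by a map of points. -/
noncomputable def push (f : α → β) : Chain α →ₗ[ℤ] Chain β := lin fun l => bs (l.map f)

@[simp] lemma push_bs (f : α → β) (l : List α) : push f (bs l) = bs (l.map f) := by simp [push]

lemma push_cone (f : α → β) (x : α) (c : Chain α) :
    push f (cone x c) = cone (f x) (push f c) := by
  have : push f ∘ₗ cone x = cone (f x) ∘ₗ push f := hom_ext fun l => by simp
  exact LinearMap.congr_fun this c

lemma push_bd (f : α → β) (c : Chain α) : push f (bd c) = bd (push f c) := by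
  have : push f ∘ₗ bd = bd ∘ₗ push f := hom_ext fun l => by
    induction l with
    | nil => simp
    | cons x l ih =>
      simp only [LinearMap.comp_apply] at ih
      simp [push_cone, ih]
  exact LinearMap.congr_fun this c

lemma push_push {γ : Type*} (f : α → β) (g : β → γ) (c : Chain α) :
    push g (push f c) = push (g ∘ f) c := by
  have : push g ∘ₗ push f = push (g ∘ f) := hom_ext fun l => by simp
  exact LinearMap.congr_fun this c

lemma push_id (c : Chain α) : push id c = c := by
  have : push id = (LinearMap.id : Chain α →ₗ[ℤ] _) := hom_ext fun l => by simp
  exact LinearMap.congr_fun this c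

/-- The chains supported on a set of lists. -/
abbrev supp (S : Set (List α)) : Submodule ℤ (Chain α) := Finsupp.supported ℤ ℤ S

lemma bs_mem {S : Set (List α)} {l : List α} (h : l ∈ S) : bs l ∈ supp S :=
  Finsupp.single_mem_supported ℤ 1 h

/-- A linear map sends `supp S` into a submodule as soon as it sends the basis chains of `S` there. -/
lemma map_mem {M : Type*} [AddCommGroup M] (f : Chain α →ₗ[ℤ] M) (S : Set (List α))
    (T : Submodule ℤ M) (h : ∀ l ∈ S, f (bs l) ∈ T) {c : Chain α} (hc : c ∈ supp S) :
    f c ∈ T := by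
  have h1 : supp S ≤ T.comap f := by
    rw [supp, Finsupp.supported_eq_span_single, Submodule.span_le]
    rintro _ ⟨l, hl, rfl⟩
    exact h l hl
  exact h1 hc

lemma eq_on_supp {M : Type*} [AddCommGroup M] (f g : Chain α →ₗ[ℤ] M) (S : Set (List α))
    (h : ∀ l ∈ S, f (bs l) = g (bs l)) {c : Chain α} (hc : c ∈ supp S) : f c = g c := by
  have := map_mem (f - g) S ⊥ (fun l hl => by simp [h l hl]) hc
  simpa [sub_eq_zero] using this

lemma supp_mono {S T : Set (List α)} (h : S ⊆ T) {c : Chain α} (hc : c ∈ supp S) : c ∈ supp T :=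
  Finsupp.supported_mono h hc

lemma bd_mem (l : List α) :
    bd (bs l) ∈ supp {l' | l'.length + 1 = l.length ∧ l'.Sublist l} := by
  induction l with
  | nil => simp
  | cons x l ih =>
    rw [bd_cons]
    refine Submodule.sub_mem _ (bs_mem ?_) (map_mem _ _ _ ?_ ih)
    · simp
    · rintro l' ⟨h1, h2⟩
      rw [cone_bs]
      exact bs_mem ⟨by simp [h1], h2.cons_cons x⟩

/-- Cap product with a 2-cochain, evaluated on the front face. -/
noncomputable def cap2 (f : α → α → α → ℤ) : Chain α →ₗ[ℤ] Chain α :=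
  lin fun
    | x :: y :: z :: l => f x y z • bs (z :: l)
    | _ => 0

/-- Cap product with a 1-cochain, evaluated on the front face. -/
noncomputable def cap1 (f : α → α → ℤ) : Chain α →ₗ[ℤ] Chain α :=
  lin fun
    | x :: y :: l => f x y • bs (y :: l)
    | _ => 0

/-- Evaluation of a 2-cochain on the 2-dimensional part of a chain. -/
noncomputable def ev2 (f : α → α → α → ℤ) : Chain α →ₗ[ℤ] ℤ :=
  lin fun
    | [x, y, z] => f x y z
    | _ => 0

/-- Evaluation of a 1-cochain on the 1-dimensional part of a chain. -/
noncomputable def ev1 (f : α → α → ℤ) : Chain α →ₗ[ℤ] ℤ :=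
  lin fun
    | [x, y] => f x y
    | _ => 0

/-- Evaluation of a 0-cochain on the 0-dimensional part of a chain. -/
noncomputable def ev0 (f : α → ℤ) : Chain α →ₗ[ℤ] ℤ :=
  lin fun
    | [x] => f x
    | _ => 0

/-- The coboundary of a 1-cochain. -/
def cobd (k : α → α → ℤ) : α → α → α → ℤ := fun x y z => k y z - k x z + k x y

/-- The 2-cocycle condition. -/
def IsCocycle (f : α → α → α → ℤ) : Prop :=
  ∀ x y z w, f y z w - f x z w + f x y w - f x y z = 0

lemma IsCocycle.add_cobd {f : α → α → α → ℤ} (hf : IsCocycle f) (k : α → α → ℤ) :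
    IsCocycle (fun x y z => f x y z + cobd k x y z) := by
  intro x y z w
  have := hf x y z w
  simp only [cobd]
  linarith

/-- The cap product on chains all of whose lists start with the three points `x`, `y`, `z`. -/
lemma cap2_cone3 (f : α → α → α → ℤ) (x y z : α) (c : Chain α) :
    cap2 f (cone x (cone y (cone z c))) = f x y z • cone z c := by
  have : cap2 f ∘ₗ cone x ∘ₗ cone y ∘ₗ cone z = f x y z • cone z := hom_ext fun l => by
    simp [cap2]
  exact LinearMap.congr_fun this c

lemma cap1_cone2 (f : α → α → ℤ) (x y : α) (c : Chain α) :
    cap1 f (cone x (cone y c)) = f x y • cone y c := by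
  have : cap1 f ∘ₗ cone x ∘ₗ cone y = f x y • cone y := hom_ext fun l => by
    simp [cap1]
  exact LinearMap.congr_fun this c

/-- Cap product with a cocycle commutes with the boundary, up to the augmentation. -/
lemma bd_cap2 {f : α → α → α → ℤ} (hf : IsCocycle f) (c : Chain α) :
    bd (cap2 f c) = cap2 f (bd c) + ev2 f c • bs [] := by
  have : bd ∘ₗ cap2 f = cap2 f ∘ₗ bd + (ev2 f).smulRight (bs []) := hom_ext fun l => by
    match l with
    | [] => simp [cap2, ev2]
    | [x] => simp [cap2, ev2]
    | [x, y] => simp [cap2, ev2]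
    | [x, y, z] => simp [cap2, ev2]
    | x :: y :: z :: w :: l =>
      have h := hf x y z w
      have e : f x y z = f y z w - f x z w + f x y w := by linarith
      simp only [LinearMap.comp_apply, LinearMap.add_apply, bd_cons, map_sub, cone_bs]
      rw [cap2_cone3]
      simp only [cap2, ev2, lin_bs, LinearMap.smulRight_apply, map_smul, bd_cons, e]
      simp only [smul_sub, sub_smul, add_smul, zero_smul, add_zero, map_sub, cone_bs, lin_bs]
      abel
  exact LinearMap.congr_fun this c

/-- Cap product with a 1-cochain is a null-homotopy of the cap product with its coboundary. -/
lemma cap2_cobd (k : α → α → ℤ) (c : Chain α) :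
    cap2 (cobd k) c = bd (cap1 k c) + cap1 k (bd c) - ev1 k c • bs [] := by
  have : cap2 (cobd k) = bd ∘ₗ cap1 k + cap1 k ∘ₗ bd - (ev1 k).smulRight (bs []) :=
    hom_ext fun l => by
    match l with
    | [] => simp [cap2, cap1, ev1]
    | [x] => simp [cap2, cap1, ev1]
    | [x, y] => simp [cap2, cap1, ev1]
    | x :: y :: z :: l =>
      simp only [LinearMap.comp_apply, LinearMap.add_apply, LinearMap.sub_apply, bd_cons, map_sub,
        cone_bs]
      rw [cap1_cone2]
      simp only [cap2, cap1, cobd, ev1, lin_bs, LinearMap.smulRight_apply, map_smul, bd_cons]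
      simp only [smul_sub, sub_smul, add_smul, zero_smul, add_zero, sub_zero, map_sub, cone_bs, lin_bs]
      abel
  exact LinearMap.congr_fun this c

lemma cap2_push (f : β → β → β → ℤ) (g : α → β) (c : Chain α) :
    cap2 f (push g c) = push g (cap2 (fun x y z => f (g x) (g y) (g z)) c) := by
  have : cap2 f ∘ₗ push g = push g ∘ₗ cap2 (fun x y z => f (g x) (g y) (g z)) :=
    hom_ext fun l => by
    match l with
    | [] | [x] | [x, y] => simp [cap2]
    | x :: y :: z :: l => simp [cap2]
  exact LinearMap.congr_fun this c

lemma cap1_push (f : β → β → ℤ) (g : α → β) (c : Chain α) :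
    cap1 f (push g c) = push g (cap1 (fun x y => f (g x) (g y)) c) := by
  have : cap1 f ∘ₗ push g = push g ∘ₗ cap1 (fun x y => f (g x) (g y)) :=
    hom_ext fun l => by
    match l with
    | [] | [x] => simp [cap1]
    | x :: y :: l => simp [cap1]
  exact LinearMap.congr_fun this c

lemma ev2_push (f : β → β → β → ℤ) (g : α → β) (c : Chain α) :
    ev2 f (push g c) = ev2 (fun x y z => f (g x) (g y) (g z)) c := by
  have : ev2 f ∘ₗ push g = ev2 (fun x y z => f (g x) (g y) (g z)) :=
    hom_ext fun l => by
    match l with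
    | [] | [x] | [x, y] | [x, y, z] => simp [ev2]
    | x :: y :: z :: w :: l => simp [ev2]
  exact LinearMap.congr_fun this c

lemma ev1_push (f : β → β → ℤ) (g : α → β) (c : Chain α) :
    ev1 f (push g c) = ev1 (fun x y => f (g x) (g y)) c := by
  have : ev1 f ∘ₗ push g = ev1 (fun x y => f (g x) (g y)) :=
    hom_ext fun l => by
    match l with
    | [] | [x] | [x, y] => simp [ev1]
    | x :: y :: z :: l => simp [ev1]
  exact LinearMap.congr_fun this c

lemma ev0_push (f : β → ℤ) (g : α → β) (c : Chain α) :
    ev0 f (push g c) = ev0 (fun x => f (g x)) c := by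
  have : ev0 f ∘ₗ push g = ev0 (fun x => f (g x)) :=
    hom_ext fun l => by
    match l with
    | [] | [x] => simp [ev0]
    | x :: y :: l => simp [ev0]
  exact LinearMap.congr_fun this c

/-- The value of the cup product of a list of 2-cochains. -/
noncomputable def cup : List (α → α → α → ℤ) → Chain α →ₗ[ℤ] ℤ
  | [] => ev0 fun _ => 1
  | f :: fs => cup fs ∘ₗ cap2 f

lemma cup_push (fs : List (β → β → β → ℤ)) (g : α → β) (c : Chain α) :
    cup fs (push g c) = cup (fs.map fun f x y z => f (g x) (g y) (g z)) c := by
  induction fs generalizing c with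
  | nil => simp [cup, ev0_push]
  | cons f fs ih => simp [cup, cap2_push, ih]

lemma cup_nil (fs : List (α → α → α → ℤ)) : cup fs (bs []) = 0 := by
  cases fs <;> simp [cup, ev0, cap2]

lemma ev0_bd (c : Chain α) : ev0 (fun _ => 1) (bd c) = 0 := by
  have : ev0 (fun _ => 1) ∘ₗ bd = (0 : Chain α →ₗ[ℤ] ℤ) := hom_ext fun l => by
    match l with
    | [] | [x] | [x, y] => simp [ev0]
    | x :: y :: z :: l =>
      have h : ∀ (x y : α) (c : Chain α), ev0 (fun _ => 1) (cone x (cone y c)) = 0 := by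
        intro x y c
        have : ev0 (fun _ => 1) ∘ₗ cone x ∘ₗ cone y = (0 : Chain α →ₗ[ℤ] ℤ) :=
          hom_ext fun l => by simp [ev0]
        exact LinearMap.congr_fun this c
      simp [h]
      simp [ev0]
  exact LinearMap.congr_fun this c

lemma cup_bd (fs : List (α → α → α → ℤ)) (hfs : ∀ f ∈ fs, IsCocycle f) (c : Chain α) :
    cup fs (bd c) = 0 := by
  induction fs generalizing c with
  | nil => exact ev0_bd c
  | cons f fs ih =>
    have h := bd_cap2 (hfs f (by simp)) c
    have h2 := ih (fun g hg => hfs g (by simp [hg])) (cap2 f c)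
    rw [h, map_add, map_smul, cup_nil] at h2
    simpa [cup] using h2

end chains

end Tverberg

/-! ### Systems: equivariant chain maps from the tensor power of the periodic resolution -/

namespace Tverberg

section systems

variable {α β : Type*} {ν : ℕ}

/-- A family of commuting self-maps of order dividing `p`, i.e. an action of `(ℤ/p)^ν`. -/
structure IsAct (p : ℕ) (τ : Fin ν → α → α) : Prop where
  comm : ∀ i j x, τ i (τ j x) = τ j (τ i x)
  iter : ∀ i x, (τ i)^[p] x = x

/-- The differential, from degree `k` to degree `k - 1`, of the standard periodic resolution of
`ℤ` over the group ring of `ℤ/p`, for the endomorphism `T` of a module. -/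
noncomputable def DD {M : Type*} [AddCommGroup M] (p : ℕ) (T : Module.End ℤ M) (k : ℕ) :
    Module.End ℤ M :=
  if k = 0 then 0 else if Odd k then T - 1 else ∑ j ∈ Finset.range p, T ^ j

/-- The Koszul sign of the `i`-th differential in multidegree `n`. -/
def sgn (i : Fin ν) (n : Fin ν → ℕ) : ℤ := (-1) ^ (∑ j ∈ Finset.univ.filter (· < i), n j)

/-- Lower the `i`-th entry of a multidegree by one. -/
def low (n : Fin ν → ℕ) (i : Fin ν) : Fin ν → ℕ := Function.update n i (n i - 1)

/-- The total differential of the tensor product of `ν` periodic resolutions, applied to a family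
of chains indexed by multidegrees. -/
noncomputable def dsum {M : Type*} [AddCommGroup M] (p : ℕ) (T : Fin ν → Module.End ℤ M)
    (Φ : (Fin ν → ℕ) → M) (n : Fin ν → ℕ) : M :=
  ∑ i, sgn i n • DD p (T i) (n i) (Φ (low n i))

section DD
variable {M M' : Type*} [AddCommGroup M] [AddCommGroup M']

@[simp] lemma DD_zero (p : ℕ) (T : Module.End ℤ M) : DD p T 0 = 0 := by simp [DD]

@[simp] lemma DD_one (p : ℕ) (T : Module.End ℤ M) : DD p T 1 = T - 1 := by simp [DD]

@[simp] lemma DD_two (p : ℕ) (T : Module.End ℤ M) :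
    DD p T 2 = ∑ j ∈ Finset.range p, T ^ j := by simp [DD]

lemma DD_add_two (p : ℕ) (T : Module.End ℤ M) (k : ℕ) (hk : k ≠ 0) :
    DD p T (k + 2) = DD p T k := by
  have : Odd (k + 2) ↔ Odd k := by simp [Nat.odd_add]
  simp [DD, hk, this]

lemma DD_mul_pred (p : ℕ) (T : Module.End ℤ M) (hT : T ^ p = 1) (k : ℕ) :
    DD p T k * DD p T (k - 1) = 0 := by
  rcases k with _ | _ | k
  · simp
  · simp
  · rw [show k + 1 + 1 - 1 = k + 1 by omega]
    by_cases h : Odd k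
    · have h1 : Odd (k + 1 + 1) := by simpa [Nat.odd_add] using h
      have h2 : ¬ Odd (k + 1) := by simpa [Nat.odd_add_one] using h
      simp [DD, h1, h2, mul_geom_sum, hT]
    · have h1 : ¬ Odd (k + 1 + 1) := by simpa [Nat.odd_add_one] using h
      have h2 : Odd (k + 1) := by simpa [Nat.odd_add_one] using h
      simp [DD, h1, h2, geom_sum_mul, hT]

lemma DD_commute (p : ℕ) {S T : Module.End ℤ M} (h : Commute S T) (k l : ℕ) :
    Commute (DD p S k) (DD p T l) := by
  have h1 : Commute S (DD p T l) := by
    unfold DD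
    split_ifs
    · exact Commute.zero_right _
    · exact h.sub_right (Commute.one_right _)
    · exact Commute.sum_right _ _ _ fun j _ => h.pow_right j
  have : Commute (DD p S k) (DD p T l) := by
    conv => arg 1; unfold DD
    split_ifs
    · exact Commute.zero_left _
    · exact h1.sub_left (Commute.one_left _)
    · exact Commute.sum_left _ _ _ fun j _ => h1.pow_left j
  exact this

lemma DD_map (p : ℕ) {T : Module.End ℤ M} {T' : Module.End ℤ M'} (L : M →ₗ[ℤ] M')
    (P : Submodule ℤ M) (hP : ∀ x ∈ P, T x ∈ P) (hL : ∀ x ∈ P, L (T x) = T' (L x)) (k : ℕ) {x : M}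
    (hx : x ∈ P) : L (DD p T k x) = DD p T' k (L x) := by
  have h : ∀ j : ℕ, (T ^ j) x ∈ P ∧ L ((T ^ j) x) = (T' ^ j) (L x) := by
    intro j
    induction j with
    | zero => simp [hx]
    | succ j ih =>
      rw [pow_succ', pow_succ']
      exact ⟨hP _ ih.1, by simp [hL _ ih.1, ih.2]⟩
  unfold DD
  split_ifs
  · simp
  · simp [hL x hx]
  · simp [LinearMap.sum_apply, (h _).2]

lemma DD_mem (p : ℕ) {T : Module.End ℤ M} (P : Submodule ℤ M) (hP : ∀ x ∈ P, T x ∈ P) (k : ℕ)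
    {x : M} (hx : x ∈ P) : DD p T k x ∈ P := by
  have h : ∀ j : ℕ, (T ^ j) x ∈ P := by
    intro j
    induction j with
    | zero => simp [hx]
    | succ j ih =>
      rw [pow_succ']
      exact hP _ ih
  unfold DD
  split_ifs
  · simp
  · exact P.sub_mem (hP x hx) hx
  · rw [LinearMap.sum_apply]
    exact P.sum_mem fun j _ => h j

/-- Values of an invariant functional on the differentials of the periodic resolution. -/
lemma DD_inv (p : ℕ) {T : Module.End ℤ M} (c : M →ₗ[ℤ] ℤ) (hc : ∀ x, c (T x) = c x) (k : ℕ)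
    (x : M) : c (DD p T k x) = if k = 0 ∨ Odd k then 0 else p * c x := by
  have h : ∀ j : ℕ, c ((T ^ j) x) = c x := by
    intro j
    induction j with
    | zero => simp
    | succ j ih => rw [pow_succ']; simp [hc, ih]
  by_cases h0 : k = 0
  · simp [h0]
  by_cases h1 : Odd k
  · simp [DD, h0, h1, hc]
  · simp only [DD, h0, h1, if_false, or_self, LinearMap.sum_apply, map_sum, h]
    simp

end DD

lemma low_comm (n : Fin ν → ℕ) {i j : Fin ν} (h : i ≠ j) : low (low n i) j = low (low n j) i := by
  simp only [low, Function.update_of_ne h, Function.update_of_ne h.symm]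
  exact Function.update_comm h _ _ _

lemma sum_low (n : Fin ν → ℕ) {i : Fin ν} (h : n i ≠ 0) : ∑ j, low n i j + 1 = ∑ j, n j := by
  rw [low, Finset.sum_update_of_mem (Finset.mem_univ i),
    ← Finset.add_sum_erase _ n (Finset.mem_univ i), Finset.sdiff_singleton_eq_erase]
  omega

lemma sgn_low_of_le (n : Fin ν → ℕ) {i j : Fin ν} (h : i ≤ j) : sgn i (low n j) = sgn i n := by
  unfold sgn low
  congr 1
  refine Finset.sum_congr rfl fun k hk => ?_
  have : k < i := by simpa using hk
  exact Function.update_of_ne (by omega) _ _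

lemma sgn_low_of_lt (n : Fin ν → ℕ) {i j : Fin ν} (h : i < j) (hn : n i ≠ 0) :
    sgn j (low n i) = - sgn j n := by
  have hi : i ∈ Finset.univ.filter (· < j) := by simpa using h
  unfold sgn low
  rw [Finset.sum_update_of_mem hi, ← Finset.add_sum_erase _ n hi,
    Finset.sdiff_singleton_eq_erase]
  obtain ⟨k, hk⟩ := Nat.exists_eq_succ_of_ne_zero hn
  rw [hk]
  simp only [Nat.succ_eq_add_one, Nat.add_sub_cancel]
  ring

lemma dsum_congr {M : Type*} [AddCommGroup M] (p : ℕ) (T : Fin ν → Module.End ℤ M)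
    {Φ Ψ : (Fin ν → ℕ) → M} (n : Fin ν → ℕ) (h : ∀ i, n i ≠ 0 → Φ (low n i) = Ψ (low n i)) :
    dsum p T Φ n = dsum p T Ψ n := by
  refine Finset.sum_congr rfl fun i _ => ?_
  by_cases hi : n i = 0
  · simp [hi]
  · rw [h i hi]

lemma dsum_dsum {M : Type*} [AddCommGroup M] (p : ℕ) (T : Fin ν → Module.End ℤ M)
    (hT : ∀ i, T i ^ p = 1) (hc : ∀ i j, Commute (T i) (T j)) (Φ : (Fin ν → ℕ) → M)
    (n : Fin ν → ℕ) : dsum p T (dsum p T Φ) n = 0 := by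
  let t : Fin ν × Fin ν → M := fun q =>
    (sgn q.1 n * sgn q.2 (low n q.1)) • DD p (T q.1) (n q.1)
      (DD p (T q.2) (low n q.1 q.2) (Φ (low (low n q.1) q.2)))
  have h0 : dsum p T (dsum p T Φ) n = ∑ q, t q := by
    rw [Fintype.sum_prod_type]
    simp [dsum, t, Finset.smul_sum, mul_smul]
  have hd : ∀ i, t (i, i) = 0 := by
    intro i
    have : DD p (T i) (n i) (DD p (T i) (n i - 1) (Φ (low (low n i) i))) = 0 := by
      rw [← Module.End.mul_apply, DD_mul_pred p _ (hT i)]; simp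
    simp only [t]
    rw [show low n i i = n i - 1 by simp [low], this, smul_zero]
  have hlt : ∀ i j, i < j → t (i, j) + t (j, i) = 0 := by
    intro i j hij
    have e1 : low n i j = n j := Function.update_of_ne hij.ne' _ _
    have e2 : low n j i = n i := Function.update_of_ne hij.ne _ _
    simp only [t, e1, e2]
    by_cases hi : n i = 0
    · simp [hi]
    have e3 : DD p (T j) (n j) (DD p (T i) (n i) (Φ (low (low n j) i))) =
        DD p (T i) (n i) (DD p (T j) (n j) (Φ (low (low n j) i))) := by
      rw [← Module.End.mul_apply, (DD_commute p (hc j i) _ _).eq, Module.End.mul_apply]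
    rw [e3, low_comm n hij.ne, sgn_low_of_lt n hij hi, sgn_low_of_le n hij.le, ← add_smul]
    ring_nf
    simp
  rw [h0]
  refine Finset.sum_involution (fun q _ => q.swap) ?_ ?_ (by simp) (by simp)
  · rintro ⟨i, j⟩ -
    rcases lt_trichotomy i j with h | rfl | h
    · exact hlt i j h
    · simp [hd]
    · rw [add_comm]; exact hlt j i h
  · rintro ⟨i, j⟩ - h1 h2
    obtain rfl : j = i := by simpa using congrArg Prod.fst h2
    exact h1 (hd _)

/-- The endomorphisms of chains induced by a family of point maps. -/
noncomputable abbrev tp (τ : Fin ν → α → α) (i : Fin ν) : Module.End ℤ (Chain α) := push (τ i)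

lemma push_pow (g : α → α) (k : ℕ) : (push g : Module.End ℤ (Chain α)) ^ k = push (g^[k]) := by
  induction k with
  | zero => exact LinearMap.ext fun c => (push_id c).symm
  | succ k ih =>
    rw [pow_succ, ih]
    refine LinearMap.ext fun c => ?_
    rw [Module.End.mul_apply, push_push]
    rfl

lemma IsAct.pow {p : ℕ} {τ : Fin ν → α → α} (h : IsAct p τ) (i : Fin ν) : tp τ i ^ p = 1 := by
  rw [tp, push_pow, show (τ i)^[p] = id from funext (h.iter i)]
  exact LinearMap.ext fun c => push_id c

lemma IsAct.commute {p : ℕ} {τ : Fin ν → α → α} (h : IsAct p τ) (i j : Fin ν) :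
    Commute (tp τ i) (tp τ j) := by
  refine LinearMap.ext fun c => ?_
  rw [Module.End.mul_apply, Module.End.mul_apply, push_push, push_push]
  congr 1
  congr 1
  funext x
  exact h.comm i j x

lemma bd_dsum (p : ℕ) (τ : Fin ν → α → α) (Φ : (Fin ν → ℕ) → Chain α) (n : Fin ν → ℕ) :
    bd (dsum p (tp τ) Φ n) = dsum p (tp τ) (fun n => bd (Φ n)) n := by
  simp only [dsum, map_sum, map_smul]
  refine Finset.sum_congr rfl fun i _ => ?_
  rw [DD_map p bd ⊤ (by simp) (T' := tp τ i) (fun x _ => (push_bd _ _).symm) _ trivial]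

lemma dsum_add {M : Type*} [AddCommGroup M] (p : ℕ) (T : Fin ν → Module.End ℤ M)
    (Φ Ψ : (Fin ν → ℕ) → M) (n : Fin ν → ℕ) :
    dsum p T (fun n => Φ n + Ψ n) n = dsum p T Φ n + dsum p T Ψ n := by
  simp [dsum, Finset.sum_add_distrib]

/-- Families of chains whose boundary is `B` plus the total differential exist on a graded
complex in which cycles bound. -/
lemma exists_family {p : ℕ} {τ : Fin ν → α → α} (hτ : IsAct p τ) (B : (Fin ν → ℕ) → Chain α)
    (S : ℕ → Submodule ℤ (Chain α)) (N : ℕ) (hST : ∀ k i, ∀ c ∈ S k, push (τ i) c ∈ S k)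
    (hB : ∀ n, ∑ i, n i < N → B n ∈ S (∑ i, n i))
    (hBd : ∀ n, ∑ i, n i < N → bd (B n) + dsum p (tp τ) B n = 0)
    (hfill : ∀ k < N, ∀ c ∈ S k, bd c = 0 → ∃ e ∈ S (k + 1), bd e = c) :
    ∃ Φ : (Fin ν → ℕ) → Chain α, ∀ n, ∑ i, n i < N →
      Φ n ∈ S (∑ i, n i + 1) ∧ bd (Φ n) = B n + dsum p (tp τ) Φ n := by
  induction N with
  | zero => exact ⟨fun _ => 0, by simp⟩
  | succ N ih =>
    obtain ⟨Φ, hΦ⟩ := ih (fun n hn => hB n (by omega)) (fun n hn => hBd n (by omega))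
      (fun k hk => hfill k (by omega))
    have key : ∀ n, ∑ i, n i = N →
        ∃ e ∈ S (N + 1), bd e = B n + dsum p (tp τ) Φ n := by
      intro n hn
      refine hfill N (by omega) _ ?_ ?_
      · refine Submodule.add_mem _ (hn ▸ hB n (by omega)) ?_
        refine Submodule.sum_mem _ fun i _ => Submodule.smul_mem _ _ ?_
        by_cases hi : n i = 0
        · simp [hi]
        have h1 := sum_low n hi
        refine DD_mem p _ (fun c hc => hST _ i c hc) _ ?_
        have := (hΦ (low n i) (by omega)).1
        rwa [h1, hn] at this
      · rw [map_add, bd_dsum, dsum_congr p _ (Ψ := fun n => B n + dsum p (tp τ) Φ n) n, dsum_add,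
          dsum_dsum p _ hτ.pow hτ.commute, add_zero]
        · exact hBd n (by omega)
        · intro i hi
          have h1 := sum_low n hi
          exact (hΦ _ (by omega)).2
    choose! e he1 he2 using key
    refine ⟨fun n => if ∑ i, n i = N then e n else Φ n, fun n hn => ?_⟩
    have hc : dsum p (tp τ) (fun n => if ∑ i, n i = N then e n else Φ n) n =
        dsum p (tp τ) Φ n := by
      refine dsum_congr p _ n fun i hi => ?_
      have h1 := sum_low n hi
      rw [if_neg (by omega)]
    rw [hc]
    beta_reduce
    split_ifs with h
    · exact ⟨h ▸ he1 n h, he2 n h⟩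
    · exact hΦ n (by omega)

/-- A system up to degree `N`: an augmentation-preserving chain map to the chains of `α`, up to
degree `N`, from the tensor product of `ν` periodic resolutions. `Φ n` is the image of the
generator of multidegree `n`. -/
def IsSystem (p : ℕ) (τ : Fin ν → α → α) (N : ℕ) (Φ : (Fin ν → ℕ) → Chain α) : Prop :=
  ∀ n, ∑ i, n i ≤ N → bd (Φ n) = dsum p (tp τ) Φ n + if n = 0 then bs [] else 0

/-- Systems are carried to systems by equivariant chain maps. The equivariance is only needed on
submodules `P k` that contain the system. -/
lemma IsSystem.map {p : ℕ} {τ : Fin ν → α → α} {τ' : Fin ν → β → β} {N : ℕ}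
    {Φ : (Fin ν → ℕ) → Chain α} (h : IsSystem p τ N Φ) (L : ℕ → Chain α →ₗ[ℤ] Chain β)
    (P : ℕ → Submodule ℤ (Chain α)) (hΦ : ∀ n, ∑ i, n i ≤ N → Φ n ∈ P (∑ i, n i + 1))
    (hP : ∀ k i, ∀ c ∈ P k, push (τ i) c ∈ P k) (hL : ∀ k c, bd (L (k + 1) c) = L k (bd c))
    (hL0 : L 0 (bs []) = bs [])
    (hLT : ∀ k i, ∀ c ∈ P k, L k (push (τ i) c) = push (τ' i) (L k c)) :
    IsSystem p τ' N fun n => L (∑ i, n i + 1) (Φ n) := by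
  intro n hn
  rw [hL, h n hn, map_add]
  congr 1
  · simp only [dsum, map_sum, map_smul]
    refine Finset.sum_congr rfl fun i _ => ?_
    by_cases hi : n i = 0
    · simp [hi]
    have h1 := sum_low n hi
    have h2 := hΦ (low n i) (by omega)
    rw [h1] at h2 ⊢
    rw [DD_map p (L _) (P _) (fun c hc => hP _ i c hc) (T' := tp τ' i)
      (fun c hc => hLT _ i c hc) _ h2]
  · split_ifs with h0
    · subst h0; simpa using hL0
    · simp

/-- An invariant functional takes values divisible by `p` on total differentials. -/
lemma dvd_dsum {p : ℕ} {τ : Fin ν → α → α} (c : Chain α →ₗ[ℤ] ℤ)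
    (hc : ∀ i x, c (push (τ i) x) = c x) (Φ : (Fin ν → ℕ) → Chain α) (n : Fin ν → ℕ) :
    (p : ℤ) ∣ c (dsum p (tp τ) Φ n) := by
  simp only [dsum, map_sum, map_smul]
  refine Finset.dvd_sum fun i _ => Dvd.dvd.mul_left ?_ _
  rw [DD_inv p c (hc i)]
  split_ifs <;> simp

lemma IsSystem.dvd {p : ℕ} {τ : Fin ν → α → α} {N : ℕ}
    {Φ : (Fin ν → ℕ) → Chain α} (h : IsSystem p τ N Φ) (c : Chain α →ₗ[ℤ] ℤ)
    (hc : ∀ i x, c (push (τ i) x) = c x) (hc0 : c (bs []) = 0) (n : Fin ν → ℕ)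
    (hn : ∑ i, n i ≤ N) : (p : ℤ) ∣ c (bd (Φ n)) := by
  rw [h n hn, map_add]
  refine dvd_add (dvd_dsum c hc Φ n) ?_
  split_ifs <;> simp [hc0]

/-- Invariance of a 2-cochain. -/
def Inv2 (τ : Fin ν → α → α) (f : α → α → α → ℤ) : Prop :=
  ∀ i x y z, f (τ i x) (τ i y) (τ i z) = f x y z

/-- Invariance of a 1-cochain. -/
def Inv1 (τ : Fin ν → α → α) (k : α → α → ℤ) : Prop :=
  ∀ i x y, k (τ i x) (τ i y) = k x y

lemma cup_inv {τ : Fin ν → α → α} (fs : List (α → α → α → ℤ)) (h : ∀ f ∈ fs, Inv2 τ f) (i : Fin ν)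
    (c : Chain α) : cup fs (push (τ i) c) = cup fs c := by
  rw [cup_push]
  congr 2
  conv_rhs => rw [← List.map_id fs]
  refine List.map_congr_left fun f hf => ?_
  funext x y z
  exact h f hf i x y z

lemma Inv2.add_cobd {τ : Fin ν → α → α} {f : α → α → α → ℤ} {k : α → α → ℤ} (hf : Inv2 τ f)
    (hk : Inv1 τ k) : Inv2 τ (fun x y z => f x y z + cobd k x y z) := by
  intro i x y z
  simp [cobd, hf i x y z, hk i]

/-- Changing cocycles by invariant coboundaries changes the cup product by an invariant
coboundary. -/
lemma cup_cohomologous {τ : Fin ν → α → α} (l : List ((α → α → α → ℤ) × (α → α → ℤ)))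
    (h : ∀ q ∈ l, IsCocycle q.1 ∧ Inv2 τ q.1 ∧ Inv1 τ q.2) :
    ∃ c : Chain α →ₗ[ℤ] ℤ, (∀ i x, c (push (τ i) x) = c x) ∧ c (bs []) = 0 ∧
      ∀ x, cup (l.map fun q x y z => q.1 x y z + cobd q.2 x y z) x - cup (l.map Prod.fst) x =
        c (bd x) := by
  induction l with
  | nil => exact ⟨0, by simp, by simp, by simp⟩
  | cons q l ih =>
    obtain ⟨c, hc1, hc2, hc3⟩ := ih fun q hq => h q (by simp [hq])
    obtain ⟨h1, h2, h3⟩ := h q (by simp)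
    set l' := l.map fun q x y z => q.1 x y z + cobd q.2 x y z with hl'
    have hinv : ∀ f ∈ l', Inv2 τ f := by
      intro f hf
      obtain ⟨q, hq, rfl⟩ := List.mem_map.1 hf
      exact (h q (by simp [hq])).2.1.add_cobd (h q (by simp [hq])).2.2
    have hcoc : ∀ f ∈ l', IsCocycle f := by
      intro f hf
      obtain ⟨q, hq, rfl⟩ := List.mem_map.1 hf
      exact (h q (by simp [hq])).1.add_cobd _
    refine ⟨c ∘ₗ cap2 q.1 + cup l' ∘ₗ cap1 q.2, ?_, ?_, ?_⟩
    · intro i x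
      have e1 : (fun x y z => q.1 (τ i x) (τ i y) (τ i z)) = q.1 := by
        funext x y z; exact h2 i x y z
      have e2 : (fun x y => q.2 (τ i x) (τ i y)) = q.2 := by
        funext x y; exact h3 i x y
      simp [cap2_push, cap1_push, e1, e2, hc1, cup_inv l' hinv]
    · simp [cap2, cap1]
    · intro x
      have e : cap2 (fun x y z => q.1 x y z + cobd q.2 x y z) x =
          cap2 q.1 x + cap2 (cobd q.2) x := by
        have : cap2 (fun x y z => q.1 x y z + cobd q.2 x y z) =
            cap2 q.1 + cap2 (cobd q.2) := hom_ext fun l => by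
          match l with
          | [] | [x] | [x, y] => simp [cap2]
          | x :: y :: z :: l => simp [cap2, add_smul]
        rw [this]; rfl
      have h4 := hc3 (cap2 q.1 x)
      rw [bd_cap2 h1] at h4
      simp only [List.map_cons, cup, LinearMap.comp_apply, LinearMap.add_apply, e, map_add, ← hl']
      rw [cap2_cobd]
      simp only [map_add, map_sub, map_smul, cup_nil, cup_bd l' hcoc, hc2, smul_zero] at h4 ⊢
      linarith

end systems

end Tverberg

/-! ### Bockstein cocycles of characters and their cup products -/

namespace Tverberg

section bar

variable {α : Type*} {ν p : ℕ}

/-- The elementary abelian group `(ℤ/p)^ν`. -/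
abbrev G (ν p : ℕ) : Type := Fin ν → ZMod p

/-- Translation by the `i`-th generator. -/
def trans (i : Fin ν) (g : G ν p) : G ν p := Pi.single i 1 + g

/-- The character with coefficient vector `a`. -/
def chi (a g : G ν p) : ZMod p := ∑ i, a i * g i

/-- The lift of the character `a` to the integers `0, …, p - 1`. -/
def cc (a g : G ν p) : ℤ := ((chi a g).val : ℤ)

/-- The homogeneous 2-cocycle on `(ℤ/p)^ν` representing the Bockstein of the character `a`. -/
def bock (a : G ν p) (x y z : G ν p) : ℤ := (cc a (y - x) + cc a (z - y) - cc a (z - x)) / p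

lemma chi_add (a g h : G ν p) : chi a (g + h) = chi a g + chi a h := by
  simp [chi, mul_add, Finset.sum_add_distrib]

lemma chi_sub (a g h : G ν p) : chi a (g - h) = chi a g - chi a h := by
  simp [chi, mul_sub, Finset.sum_sub_distrib]

lemma chi_single (a : G ν p) (i : Fin ν) : chi a (Pi.single i 1) = a i := by
  simp [chi, Pi.single_apply]

lemma cc_cast [NeZero p] (a g : G ν p) : ((cc a g : ℤ) : ZMod p) = chi a g := by
  simp [cc]

lemma bock_mul [NeZero p] (a x y z : G ν p) :
    (p : ℤ) * bock a x y z = cc a (y - x) + cc a (z - y) - cc a (z - x) := by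
  refine Int.mul_ediv_cancel' ?_
  rw [← ZMod.intCast_zmod_eq_zero_iff_dvd]
  push_cast
  simp only [cc_cast, chi_sub]
  ring

lemma bock_cocycle [NeZero p] (a : G ν p) : IsCocycle (bock a) := by
  intro x y z w
  have hp : (p : ℤ) ≠ 0 := by exact_mod_cast NeZero.ne p
  apply mul_left_cancel₀ hp
  have h1 := bock_mul a y z w
  have h2 := bock_mul a x z w
  have h3 := bock_mul a x y w
  have h4 := bock_mul a x y z
  linarith

lemma bock_inv (a : G ν p) : Inv2 trans (bock a) := by
  intro i x y z
  simp [bock, trans]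

lemma trans_isAct : IsAct p (trans : Fin ν → G ν p → G ν p) := by
  refine ⟨fun i j x => add_left_comm _ _ _, fun i x => ?_⟩
  have : ∀ k : ℕ, (trans i)^[k] x = k • Pi.single i 1 + x := by
    intro k
    induction k with
    | zero => simp
    | succ k ih => rw [Function.iterate_succ_apply', ih, trans, succ_nsmul', add_assoc]
  rw [this]
  ext j
  simp

/-- Lists of length `k`. -/
def lens (α : Type*) (k : ℕ) : Set (List α) := {l | l.length = k}

lemma bock_ev [NeZero p] (a : G ν p) (x : Chain (G ν p)) :
    (p : ℤ) * ev2 (bock a) x = ev1 (fun x y => cc a (y - x)) (bd x) := by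
  have : (p : ℤ) • ev2 (bock a) = ev1 (fun x y => cc a (y - x)) ∘ₗ bd := hom_ext fun l => by
    match l with
    | [] | [x] | [x, y] => simp [ev2, ev1]
    | [x, y, z] => simp [ev2, ev1, bock_mul]; ring
    | x :: y :: z :: w :: l =>
      have h : ∀ (x y z : G ν p) (c : Chain (G ν p)),
          ev1 (fun x y => cc a (y - x)) (cone x (cone y (cone z c))) = 0 := by
        intro x y z c
        have : ev1 (fun x y => cc a (y - x)) ∘ₗ cone x ∘ₗ cone y ∘ₗ cone z
          = (0 : Chain (G ν p) →ₗ[ℤ] ℤ) := hom_ext fun l => by simp [ev1]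
        exact LinearMap.congr_fun this c
      simp [h]
      simp [ev1, ev2]
  exact LinearMap.congr_fun this x

lemma ev_eq_zero {f : α → α → α → ℤ} {k : ℕ} (hk : k ≠ 3) {x : Chain α} (hx : x ∈ supp (lens α k)) :
    ev2 f x = 0 := by
  refine eq_on_supp (ev2 f) 0 _ ?_ hx
  intro l hl
  match l with
  | [] | [x] | [x, y] => simp [ev2]
  | [x, y, z] => exact absurd hl.symm (by simpa using hk)
  | x :: y :: z :: w :: l => simp [ev2]

/-- Shift a family of chains by twice the `i`-th unit multidegree. -/
def sh (i : Fin ν) (Φ : (Fin ν → ℕ) → Chain α) (n : Fin ν → ℕ) : Chain α :=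
  if 2 ≤ n i then Φ (Function.update n i (n i - 2)) else 0

lemma sgn_sub_two (n : Fin ν → ℕ) (i j : Fin ν) (h : 2 ≤ n i) :
    sgn j (Function.update n i (n i - 2)) = sgn j n := by
  unfold sgn
  by_cases hi : i ∈ Finset.univ.filter (· < j)
  · rw [Finset.sum_update_of_mem hi, ← Finset.add_sum_erase _ n hi,
      Finset.sdiff_singleton_eq_erase]
    obtain ⟨k, hk⟩ := Nat.exists_eq_add_of_le' h
    rw [hk]
    simp only [Nat.add_sub_cancel]
    ring
  · congr 1
    refine Finset.sum_congr rfl fun k hk => Function.update_of_ne ?_ _ _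
    rintro rfl
    exact hi hk

lemma dsum_sh (T : Fin ν → Module.End ℤ (Chain α)) (i : Fin ν) (Φ : (Fin ν → ℕ) → Chain α)
    (n : Fin ν → ℕ) : dsum p T (sh i Φ) n = sh i (dsum p T Φ) n := by
  unfold sh
  split_ifs with h
  · refine Finset.sum_congr rfl fun j _ => ?_
    rw [sgn_sub_two n i j h]
    congr 1
    by_cases hj : j = i
    · subst hj
      by_cases h2 : n j = 2
      · simp [h2, low]
      · have e1 : 2 ≤ low n j j := by simp [low]; omega
        have e2 : DD p (T j) (n j) = DD p (T j) (n j - 2) := by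
          rw [← DD_add_two p _ (n j - 2) (by omega), Nat.sub_add_cancel h]
        beta_reduce
        rw [if_pos e1, e2]
        simp only [low, Function.update_self, Function.update_idem]
        rw [show n j - 1 - 2 = n j - 2 - 1 by omega]
    · have e1 : low n j i = n i := Function.update_of_ne (Ne.symm hj) _ _
      have e2 : Function.update n i (n i - 2) j = n j := Function.update_of_ne hj _ _
      beta_reduce
      rw [if_pos (by omega), e2, e1]
      simp only [low, e2]
      rw [Function.update_comm hj]
  · refine Finset.sum_eq_zero fun j _ => ?_
    have : ¬ 2 ≤ low n j i := by
      by_cases hj : i = j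
      · subst hj; simp [low]; omega
      · simpa [low, Function.update_of_ne hj] using h
    beta_reduce
    rw [if_neg this, map_zero, smul_zero]

lemma dsum_sub {M : Type*} [AddCommGroup M] (p : ℕ) (T : Fin ν → Module.End ℤ M)
    (Φ Ψ : (Fin ν → ℕ) → M) (n : Fin ν → ℕ) :
    dsum p T (fun n => Φ n - Ψ n) n = dsum p T Φ n - dsum p T Ψ n := by
  simp [dsum, smul_sub, Finset.sum_sub_distrib]

lemma dsum_smul_sum {M ι : Type*} [AddCommGroup M] (p : ℕ) (T : Fin ν → Module.End ℤ M)
    (s : Finset ι) (a : ι → ℤ) (Φ : ι → (Fin ν → ℕ) → M) (n : Fin ν → ℕ) :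
    dsum p T (fun n => ∑ j ∈ s, a j • Φ j n) n = ∑ j ∈ s, a j • dsum p T (Φ j) n := by
  simp only [dsum, map_sum, map_smul, Finset.smul_sum]
  rw [Finset.sum_comm]
  refine Finset.sum_congr rfl fun j _ => Finset.sum_congr rfl fun i _ => smul_comm _ _ _

/-- The total mass of the bottom chain of a system is one. -/
lemma IsSystem.mass {τ : Fin ν → α → α} {N : ℕ} {Φ : (Fin ν → ℕ) → Chain α}
    (h : IsSystem p τ N Φ) : ev0 (fun _ => 1) (Φ 0) = 1 := by
  have h1 : ∀ x : Chain α, ev0 (fun _ => 1) x = (bd x) [] := by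
    intro x
    have : ev0 (fun _ => 1) = Finsupp.lapply [] ∘ₗ (bd : Chain α →ₗ[ℤ] _) := hom_ext fun l => by
      match l with
      | [] => simp [ev0]
      | [x] => simp [ev0]; simp [bs]
      | x :: y :: l =>
        have h2 : ∀ c : Chain α, cone x c [] = 0 := by
          intro c
          have : Finsupp.lapply [] ∘ₗ cone x = (0 : Chain α →ₗ[ℤ] ℤ) :=
            hom_ext fun l => by simp; simp [bs]
          exact LinearMap.congr_fun this c
        simp only [LinearMap.comp_apply, bd_cons, map_sub, cone_bs]
        simp [h2]
        simp [ev0, bs]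
    exact LinearMap.congr_fun this x
  rw [h1, h 0 (by simp)]
  simp [dsum, bs]

/-- The value of the Bockstein on the generators of degree two. -/
lemma bock_value [NeZero p] {N : ℕ} {Φ : (Fin ν → ℕ) → Chain (G ν p)}
    (h : IsSystem p trans N Φ) (hΦ : ∀ n, ∑ i, n i ≤ N → Φ n ∈ supp (lens (G ν p) (∑ i, n i + 1)))
    (hN : 2 ≤ N) (a : G ν p) (i : Fin ν) : (ev2 (bock a) (Φ (Pi.single i 2)) : ZMod p) = a i := by
  have hp : (p : ℤ) ≠ 0 := by exact_mod_cast NeZero.ne p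
  set c := ev1 (fun x y : G ν p => cc a (y - x)) with hc
  have hcinv : ∀ i x, c (push (trans i) x) = c x := by
    intro i x
    rw [hc, ev1_push]
    simp [trans]
  have hl2 : low (Pi.single i 2) i = (Pi.single i 1 : Fin ν → ℕ) := by
    ext j; by_cases hj : j = i
    · subst hj; simp [low]
    · simp [low, hj]
  have hl1 : low (Pi.single i 1) i = (0 : Fin ν → ℕ) := by
    ext j; by_cases hj : j = i
    · subst hj; simp [low]
    · simp [low, hj]
  have hs : ∀ k : ℕ, sgn i (Pi.single i k) = 1 := by
    intro k
    have : ∑ j ∈ Finset.univ.filter (· < i), (Pi.single i k : Fin ν → ℕ) j = 0 := by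
      refine Finset.sum_eq_zero fun j hj => ?_
      have : j ≠ i := by
        rintro rfl; simp at hj
      simp [this]
    simp [sgn, this]
  have hd : ∀ k : ℕ, dsum p (tp trans) Φ (Pi.single i k) =
      DD p (tp trans i) k (Φ (low (Pi.single i k) i)) := by
    intro k
    rw [dsum, Finset.sum_eq_single i]
    · simp [hs]
    · intro j _ hj
      simp [hj]
    · simp
  have e1 : ev2 (bock a) (Φ (Pi.single i 2)) = c (Φ (Pi.single i 1)) := by
    apply mul_left_cancel₀ hp
    rw [bock_ev, h _ (by simpa using hN), hd, hl2, if_neg, add_zero, ← hc, DD_inv p c (hcinv i)]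
    · simp
    · intro h0; simpa using congrFun h0 i
  have key : ∀ (q : ℕ) (x : Chain (G ν p)), x ∈ supp (lens (G ν p) 2) → (c x : ZMod p) =
      lin (fun l => match l with | [g] => chi a g | _ => 0) (bd x) := by
    intro _ x hx
    refine eq_on_supp ((Int.castAddHom (ZMod p)).toIntLinearMap ∘ₗ c)
      (lin (fun l => match l with | [g] => chi a g | _ => 0) ∘ₗ bd) _ ?_ hx
    intro l hl
    match l with
    | [] => simp [lens] at hl
    | [x] => simp [lens] at hl
    | [x, y] => simp [hc, ev1, cc_cast, chi_sub]
    | x :: y :: z :: l => simp [lens] at hl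
  have key2 : ∀ x : Chain (G ν p),
      lin (fun l => match l with | [g] => chi a g | _ => 0) (push (trans i) x - x) =
        a i * ((ev0 (fun _ => 1) x : ℤ) : ZMod p) := by
    intro x
    have : lin (fun l => match l with | [g] => chi a g | _ => 0) ∘ₗ (push (trans i) - LinearMap.id)
        = (LinearMap.mulLeft ℤ (a i)) ∘ₗ
          (Int.castAddHom (ZMod p)).toIntLinearMap ∘ₗ ev0 (fun _ : G ν p => 1) :=
      hom_ext fun l => by
        match l with
        | [] => simp [ev0]
        | [x] => simp [ev0, trans, chi_add, chi_single]
        | x :: y :: l => simp [ev0]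
    exact LinearMap.congr_fun this x
  have hm := hΦ (Pi.single i 1) (by simp; omega)
  rw [show ∑ j, (Pi.single i 1 : Fin ν → ℕ) j + 1 = 2 by simp] at hm
  rw [e1, key 0 _ hm, h _ (by simp; omega), hd, hl1, if_neg, add_zero, DD_one]
  · have := key2 (Φ 0)
    rw [h.mass] at this
    simpa using this
  · intro h0; simpa using congrFun h0 i

lemma eq_single_of_sum {n : Fin ν → ℕ} {i : Fin ν} (hi : 2 ≤ n i) (hs : ∑ j, n j = 2) :
    n = Pi.single i 2 := by
  rw [← Finset.add_sum_erase _ n (Finset.mem_univ i)] at hs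
  have h0 : ∑ j ∈ Finset.univ.erase i, n j = 0 := by omega
  ext j
  by_cases hj : j = i
  · subst hj; simp; omega
  · simp only [ne_eq, hj, not_false_eq_true, Pi.single_eq_of_ne]
    exact (Finset.sum_eq_zero_iff.1 h0) j (by simp [hj])

/-- The Bockstein cocycle of `a` acts on systems as the quadratic polynomial `∑ aᵢ Xᵢ²`, modulo
`p`: capping with it differs from the corresponding combination of shifts by a homotopy, since the
cones make the chains on the group acyclic, and after evaluation the homotopy terms vanish
modulo `p`. -/
lemma cup_cons [NeZero p] {N : ℕ} {Φ : (Fin ν → ℕ) → Chain (G ν p)}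
    (h : IsSystem p trans N Φ) (hΦ : ∀ n, ∑ i, n i ≤ N → Φ n ∈ supp (lens (G ν p) (∑ i, n i + 1)))
    (a : G ν p) (fs : List (G ν p → G ν p → G ν p → ℤ))
    (hfs : ∀ f ∈ fs, IsCocycle f ∧ Inv2 trans f) (n : Fin ν → ℕ) (hn : ∑ i, n i ≤ N) :
    (cup (bock a :: fs) (Φ n) : ZMod p) =
      ∑ i, if 2 ≤ n i then a i * cup fs (Φ (Function.update n i (n i - 2))) else 0 := by
  have hp : (p : ℤ) ≠ 0 := by exact_mod_cast NeZero.ne p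
  set A : Fin ν → ℤ := fun i => ev2 (bock a) (Φ (Pi.single i 2)) with hA
  let Ψ : (Fin ν → ℕ) → Chain (G ν p) := fun n => cap2 (bock a) (Φ n) - ∑ i, A i • sh i Φ n
  have hev : ∀ n, ∑ i, n i ≤ N →
      ev2 (bock a) (Φ n) = ∑ i, if n = Pi.single i 2 then A i else 0 := by
    intro n hn
    by_cases h2 : ∃ i, n = Pi.single i 2
    · obtain ⟨i, rfl⟩ := h2
      rw [Finset.sum_eq_single i]
      · simp [hA]
      · intro j _ hj
        rw [if_neg]
        intro h0
        simpa [hj] using congrFun h0 j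
      · simp
    · push Not at h2
      rw [Finset.sum_eq_zero fun i _ => if_neg (h2 i)]
      by_cases hs : ∑ i, n i = 2
      · have h1 : ∀ i, n i = 0 ∨ n i = 1 := by
          intro i
          by_contra h3
          exact h2 i (eq_single_of_sum (by omega) hs)
        apply mul_left_cancel₀ hp
        have hn0 : n ≠ 0 := by
          rintro rfl; simp at hs
        rw [bock_ev, h n hn, if_neg hn0, add_zero, dsum, map_sum, mul_zero]
        refine Finset.sum_eq_zero fun i _ => ?_
        rw [map_smul, DD_inv p (T := tp trans i) _ (fun x => by rw [tp, ev1_push]; simp [trans]),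
          if_pos, smul_zero]
        rcases h1 i with h1 | h1 <;> simp [h1]
      · exact ev_eq_zero (by omega) (hΦ n hn)
  have hΨ : ∀ n, ∑ i, n i ≤ N → bd (Ψ n) = dsum p (tp trans) Ψ n := by
    intro n hn
    have e1 : bd (cap2 (bock a) (Φ n)) =
        dsum p (tp trans) (fun n => cap2 (bock a) (Φ n)) n + ev2 (bock a) (Φ n) • bs [] := by
      rw [bd_cap2 (bock_cocycle a), h n hn, map_add]
      congr 1
      have : cap2 (bock a) (if n = 0 then bs [] else 0) = 0 := by
        split_ifs <;> simp [cap2]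
      rw [this, add_zero]
      simp only [dsum, map_sum, map_smul]
      refine Finset.sum_congr rfl fun i _ => ?_
      rw [DD_map p _ ⊤ (by simp) (T' := tp trans i) (fun x _ => ?_) _ trivial]
      rw [tp, cap2_push]
      congr 3
      funext x y z
      exact bock_inv a i x y z
    have e2 : ∀ i, bd (sh i Φ n) =
        dsum p (tp trans) (sh i Φ) n + if n = Pi.single i 2 then bs [] else 0 := by
      intro i
      rw [dsum_sh]
      unfold sh
      by_cases hi : 2 ≤ n i
      · rw [if_pos hi, if_pos hi, h]
        · congr 1
          refine if_congr ?_ rfl rfl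
          constructor
          · intro h0
            ext j
            by_cases hj : j = i
            · subst hj
              have := congrFun h0 j
              simp at this ⊢
              omega
            · have := congrFun h0 j
              simpa [hj] using this
          · rintro rfl
            ext j
            by_cases hj : j = i
            · subst hj; simp
            · simp [hj]
        · refine le_trans (Finset.sum_le_sum fun j _ => ?_) hn
          by_cases hj : j = i
          · subst hj; simp
          · simp [hj]
      · have : n ≠ Pi.single i 2 := by
          rintro rfl; simp at hi
        simp [hi, this]
    simp only [Ψ]
    rw [dsum_sub, dsum_smul_sum, map_sub, e1, hev n hn, map_sum]
    simp only [map_smul, e2, smul_add, Finset.sum_add_distrib, Finset.sum_smul, ite_smul, zero_smul,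
      smul_ite, smul_zero]
    abel
  obtain ⟨η, hη⟩ := exists_family (trans_isAct (ν := ν) (p := p))
    (fun n => (-1 : ℤ) ^ (∑ i, n i) • Ψ n) (fun _ => ⊤) (N + 1) (by simp) (by simp)
    (by
      intro n hn
      rw [map_smul, hΨ n (by omega), dsum, dsum, Finset.smul_sum, ← Finset.sum_add_distrib]
      refine Finset.sum_eq_zero fun i _ => ?_
      by_cases hi : n i = 0
      · simp [hi]
      · rw [← sum_low n hi, map_smul, smul_comm, ← smul_add, ← add_smul]
        ring_nf
        simp)
    (fun k _ c _ hc => ⟨cone 0 c, trivial, by simp [bd_cone, hc]⟩)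
  have hcoc : ∀ f ∈ fs, IsCocycle f := fun f hf => (hfs f hf).1
  have h1 : cup fs (bd (η n)) = 0 := cup_bd fs hcoc _
  rw [(hη n (by omega)).2, map_add, map_smul] at h1
  have h2 : (p : ℤ) ∣ cup fs (dsum p (tp trans) η n) :=
    dvd_dsum _ (cup_inv fs fun f hf => (hfs f hf).2) _ _
  have h3 : (p : ℤ) ∣ cup fs (Ψ n) := by
    have h4 : (p : ℤ) ∣ (-1) ^ (∑ i, n i) • cup fs (Ψ n) := by
      have : (-1) ^ (∑ i, n i) • cup fs (Ψ n) = - cup fs (dsum p (tp trans) η n) := by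
        linarith
      rw [this]; exact (dvd_neg).2 h2
    rcases neg_one_pow_eq_or ℤ (∑ i, n i) with h5 | h5 <;> simpa [h5] using h4
  rw [← ZMod.intCast_zmod_eq_zero_iff_dvd] at h3
  simp only [Ψ, map_sub, map_sum, map_smul, Int.cast_sub, Int.cast_sum, sub_eq_zero] at h3
  rw [cup, LinearMap.comp_apply, h3]
  refine Finset.sum_congr rfl fun i _ => ?_
  unfold sh
  split_ifs with hi
  · have hN : 2 ≤ N := by
      have := Finset.single_le_sum (f := n) (fun j _ => Nat.zero_le _) (Finset.mem_univ i)
      omega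
    rw [smul_eq_mul, Int.cast_mul, hA, bock_value h hΦ hN]
  · simp

open MvPolynomial in
/-- The cup product of Bockstein cocycles on a system, modulo `p`, is given by the coefficients of
a product of quadratic forms. -/
lemma cup_eq_coeff [NeZero p] {N : ℕ} {Φ : (Fin ν → ℕ) → Chain (G ν p)}
    (h : IsSystem p trans N Φ) (hΦ : ∀ n, ∑ i, n i ≤ N → Φ n ∈ supp (lens (G ν p) (∑ i, n i + 1)))
    (as : List (G ν p)) (n : Fin ν →₀ ℕ) (hn : ∑ i, n i ≤ N) :
    (cup (as.map bock) (Φ n) : ZMod p) =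
      coeff n ((as.map fun a => ∑ i, monomial (Finsupp.single i 2) (a i)).prod) := by
  induction as generalizing n with
  | nil =>
    simp only [List.map_nil, List.prod_nil, coeff_one]
    split_ifs with h0
    · subst h0
      rw [Finsupp.coe_zero, cup, h.mass, Int.cast_one]
    · have : ∑ i, n i ≠ 0 := by
        intro h1
        apply h0
        ext i
        exact ((Finset.sum_eq_zero_iff.1 h1) i (Finset.mem_univ i)).symm
      have : cup [] (Φ n) = 0 := by
        refine eq_on_supp (cup []) 0 _ ?_ (hΦ n hn)
        intro l hl
        match l with
        | [] => simp [lens] at hl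
        | [x] => exact absurd (Nat.succ.inj hl).symm this
        | x :: y :: l => simp [cup, ev0]
      simp [this]
  | cons a as ih =>
    rw [List.map_cons, cup_cons h hΦ a _ ?_ n hn]
    · rw [List.map_cons, List.prod_cons, Finset.sum_mul, coeff_sum]
      refine Finset.sum_congr rfl fun i _ => ?_
      rw [coeff_monomial_mul']
      simp only [Finsupp.single_le_iff]
      split_ifs with hi
      · have e : Function.update (⇑n) i (n i - 2) = ⇑(n - Finsupp.single i 2 : Fin ν →₀ ℕ) := by
          ext j
          by_cases hj : j = i
          · subst hj; simp
          · simp [hj]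
        rw [e, ih]
        refine le_trans (Finset.sum_le_sum fun j _ => ?_) hn
        simp
      · rfl
    · intro f hf
      obtain ⟨b, _, rfl⟩ := List.mem_map.1 hf
      exact ⟨bock_cocycle b, bock_inv b⟩

open MvPolynomial in
lemma exists_coeff_ne_zero [Fact p.Prime] (as : List (G ν p)) (has : ∀ a ∈ as, a ≠ 0) :
    ∃ n : Fin ν →₀ ℕ, ∑ i, n i = 2 * as.length ∧
      coeff n ((as.map fun a => ∑ i, monomial (Finsupp.single i 2) (a i)).prod) ≠ 0 := by
  have hne : (as.map fun a : G ν p =>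
      (∑ i, monomial (Finsupp.single i 2) (a i) : MvPolynomial (Fin ν) (ZMod p))).prod ≠ 0 := by
    rw [ne_eq, List.prod_eq_zero_iff]
    intro h0
    obtain ⟨a, ha, h1⟩ := List.mem_map.1 h0
    apply has a ha
    funext i
    have := congrArg (coeff (Finsupp.single i 2)) h1
    rw [coeff_sum, Finset.sum_eq_single i] at this
    · simpa using this
    · intro j _ hj
      rw [coeff_monomial, if_neg]
      intro h2
      have := congrArg (fun q => q j) h2
      simp [hj.symm] at this
    · simp
  have hhom : IsHomogeneous ((as.map fun a : G ν p =>
      (∑ i, monomial (Finsupp.single i 2) (a i) : MvPolynomial (Fin ν) (ZMod p))).prod)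
      (2 * as.length) := by
    clear hne has
    induction as with
    | nil => simpa using isHomogeneous_one _ _
    | cons a as ih =>
      rw [List.map_cons, List.prod_cons, List.length_cons, mul_add, add_comm]
      refine IsHomogeneous.mul (IsHomogeneous.sum _ _ _ fun i _ => ?_) ih
      exact isHomogeneous_monomial _ (by simp [Finsupp.degree_single])
  obtain ⟨n, hn⟩ := ne_zero_iff.1 hne
  refine ⟨n, ?_, hn⟩
  have := hhom hn
  rw [show (1 : Fin ν → ℕ) = fun _ => 1 from rfl, ← Finsupp.degree_eq_weight_one,
    Finsupp.degree_eq_sum] at this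
  exact this

/-- On a space with an equivariant map to `(ℤ/p)^ν`, the cup product of Bocksteins of nonzero
characters, altered by arbitrary invariant coboundaries, does not vanish on a system. -/
theorem exists_cup_ne_zero [Fact p.Prime] {τ : Fin ν → α → α} (γ : α → G ν p)
    (hγ : ∀ i x, γ (τ i x) = Pi.single i 1 + γ x) {N : ℕ} {Φ : (Fin ν → ℕ) → Chain α}
    (h : IsSystem p τ N Φ) (hΦ : ∀ n, ∑ i, n i ≤ N → Φ n ∈ supp (lens α (∑ i, n i + 1)))
    (ls : List (G ν p × (α → α → ℤ))) (hls : ∀ q ∈ ls, q.1 ≠ 0 ∧ Inv1 τ q.2)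
    (hN : N = 2 * ls.length) :
    ∃ n, ∑ i, n i = N ∧
      cup (ls.map fun q x y z => bock q.1 (γ x) (γ y) (γ z) + cobd q.2 x y z) (Φ n) ≠ 0 := by
  have hsys : IsSystem p trans N fun n => push γ (Φ n) := by
    refine h.map (τ' := trans) (fun _ => push γ) (fun _ => ⊤) (by simp) (by simp)
      (fun _ c => (push_bd γ c).symm) (by simp) ?_
    intro _ i c _
    rw [push_push, push_push]
    congr 2
    funext x
    exact hγ i x
  have hlen : ∀ n, ∑ i, n i ≤ N → push γ (Φ n) ∈ supp (lens (G ν p) (∑ i, n i + 1)) := by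
    intro n hn
    refine map_mem _ _ _ ?_ (hΦ n hn)
    intro l hl
    rw [push_bs]
    exact bs_mem (by simpa [lens] using hl)
  obtain ⟨n, hn, hne⟩ := exists_coeff_ne_zero (ls.map Prod.fst) (by
    intro a ha
    obtain ⟨q, hq, rfl⟩ := List.mem_map.1 ha
    exact (hls q hq).1)
  rw [List.length_map, ← hN] at hn
  rw [← cup_eq_coeff hsys hlen _ n hn.le, cup_push] at hne
  refine ⟨n, hn, fun h0 => hne ?_⟩
  obtain ⟨c, hc1, hc2, hc3⟩ := cup_cohomologous (τ := τ)
    (ls.map fun q => ((fun x y z => bock q.1 (γ x) (γ y) (γ z)), q.2)) (by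
      intro q hq
      obtain ⟨q, hq', rfl⟩ := List.mem_map.1 hq
      refine ⟨fun x y z w => bock_cocycle q.1 _ _ _ _, fun i x y z => ?_, (hls q hq').2⟩
      simp only [hγ]
      exact bock_inv q.1 i _ _ _)
  have h1 := hc3 (Φ n)
  have h2 := h.dvd c hc1 hc2 n hn.le
  rw [← h1] at h2
  simp only [List.map_map, Function.comp_def] at h2 ⊢
  rw [h0, zero_sub, dvd_neg, ← ZMod.intCast_zmod_eq_zero_iff_dvd] at h2
  exact h2

end bar

end Tverberg

/-! ### A system on the join of copies of the group -/

namespace Tverberg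

section join

variable {ν p : ℕ}

/-- The strictly increasing lists of length `k` of vertices of the join of copies of `(ℤ/p)^ν`, with
rows in `[q, M)`. -/
def inc (ν p q M k : ℕ) : Set (List (ℕ × G ν p)) :=
  {l | l.length = k ∧ l.Pairwise (fun u v => u.1 < v.1) ∧ ∀ v ∈ l, q ≤ v.1 ∧ v.1 < M}

/-- A contraction of the join of the rows with index at least `q`. It cones off with the vertex
`(q, 0)` and corrects the simplices that already meet row `q`. -/
noncomputable def contr : ℕ → List (ℕ × G ν p) → Chain (ℕ × G ν p)
  | q, [] => bs [(q, 0)]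
  | q, v :: l =>
    if v.1 = q then cone (q, 0) (contr (q + 1) l) - cone v (contr (q + 1) l)
    else cone (q, 0) (bs (v :: l))

lemma contr_of_lt {q : ℕ} {l : List (ℕ × G ν p)} (h : ∀ v ∈ l, q < v.1) :
    contr q l = cone (q, 0) (bs l) := by
  cases l with
  | nil => simp [contr]
  | cons v l => rw [contr, if_neg (h v (by simp)).ne']

lemma contr_mem {M : ℕ} (l : List (ℕ × G ν p)) : ∀ q k, k + q < M → l ∈ inc ν p q M k →
    contr q l ∈ supp (inc ν p q M (k + 1)) := by
  induction l with
  | nil =>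
    rintro q k h ⟨rfl, -, -⟩
    exact bs_mem ⟨rfl, by simp, by simpa using h⟩
  | cons v l ih =>
    rintro q k h ⟨rfl, h2, h3⟩
    have hq : q < M := by omega
    rw [List.pairwise_cons] at h2
    by_cases hv : v.1 = q
    · rw [contr, if_pos hv]
      have hl : l ∈ inc ν p (q + 1) M l.length := by
        refine ⟨rfl, h2.2, fun w hw => ⟨?_, (h3 w (by simp [hw])).2⟩⟩
        have := h2.1 w hw
        omega
      have h4 := ih (q + 1) l.length (by simp at h; omega) hl
      have key : ∀ w : ℕ × G ν p, w.1 = q → cone w (contr (q + 1) l) ∈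
          supp (inc ν p q M ((v :: l).length + 1)) := by
        intro w hw
        refine map_mem _ _ _ ?_ h4
        rintro l' ⟨h5, h6, h7⟩
        rw [cone_bs]
        refine bs_mem ⟨by simp [h5], List.pairwise_cons.2 ⟨fun u hu => ?_, h6⟩, ?_⟩
        · have := (h7 u hu).1; omega
        · intro u hu
          rcases List.mem_cons.1 hu with rfl | hu
          · omega
          · have := h7 u hu; omega
      exact Submodule.sub_mem _ (key _ rfl) (key _ hv)
    · have hlt : ∀ w ∈ v :: l, q < w.1 := by
        intro w hw
        have h4 := (h3 v (by simp)).1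
        rcases List.mem_cons.1 hw with rfl | hw
        · omega
        · have := h2.1 w hw; omega
      rw [contr_of_lt hlt, cone_bs]
      refine bs_mem ⟨rfl, List.pairwise_cons.2 ⟨hlt, List.pairwise_cons.2 h2⟩, ?_⟩
      intro u hu
      rcases List.mem_cons.1 hu with rfl | hu
      · exact ⟨le_rfl, hq⟩
      · exact h3 u hu

lemma contr_cone {q : ℕ} {v : ℕ × G ν p} (hv : v.1 = q) (c : Chain (ℕ × G ν p)) :
    lin (contr q) (cone v c) =
      cone (q, 0) (lin (contr (q + 1)) c) - cone v (lin (contr (q + 1)) c) := by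
  have : lin (contr q) ∘ₗ cone v =
      cone (q, 0) ∘ₗ lin (contr (q + 1)) - cone v ∘ₗ lin (contr (q + 1)) := hom_ext fun l => by
    simp [contr, hv]
  exact LinearMap.congr_fun this c

/-- `contr q` is a chain contraction of the join of the rows with index at least `q`. -/
lemma bd_contr (l : List (ℕ × G ν p)) : ∀ q, l.Pairwise (fun u v => u.1 < v.1) →
    (∀ v ∈ l, q ≤ v.1) → bd (contr q l) + lin (contr q) (bd (bs l)) = bs l := by
  induction l with
  | nil => intro q _ _; simp [contr]
  | cons v l ih =>
    intro q h2 h3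
    rw [List.pairwise_cons] at h2
    by_cases hv : v.1 = q
    · have h4 := ih (q + 1) h2.2 fun w hw => by have := h2.1 w hw; omega
      have h5 : cone v (bs l) = bs (v :: l) := cone_bs _ _
      have h6 : contr q l = cone (q, 0) (bs l) :=
        contr_of_lt fun w hw => by have := h2.1 w hw; omega
      rw [contr, if_pos hv, bd_cons, map_sub, map_sub, bd_cone, bd_cone, contr_cone hv, lin_bs,
        h6, eq_sub_iff_add_eq.2 h4]
      simp only [map_sub, h5]
      abel
    · have hlt : ∀ w ∈ v :: l, q < w.1 := by
        intro w hw
        have h4 := h3 v (by simp)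
        rcases List.mem_cons.1 hw with rfl | hw
        · omega
        · have := h2.1 w hw; omega
      have : lin (contr q) (bd (bs (v :: l))) = cone (q, 0) (bd (bs (v :: l))) := by
        refine eq_on_supp _ _ _ ?_ (bd_mem (v :: l))
        rintro l' ⟨-, h5⟩
        rw [lin_bs, contr_of_lt fun w hw => hlt w (h5.subset hw)]
      rw [this, contr_of_lt hlt, bd_cone]
      abel

/-- The action of the generators on the vertices of the join. -/
def jtrans (i : Fin ν) (v : ℕ × G ν p) : ℕ × G ν p := (v.1, trans i v.2)

lemma jtrans_isAct : IsAct p (jtrans : Fin ν → ℕ × G ν p → ℕ × G ν p) := by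
  refine ⟨fun i j x => ?_, fun i x => ?_⟩
  · simp [jtrans, trans_isAct.comm i j]
  · have : ∀ k : ℕ, (jtrans i)^[k] x = (x.1, (trans i)^[k] x.2) := by
      intro k
      induction k with
      | zero => rfl
      | succ k ih => rw [Function.iterate_succ_apply', ih, Function.iterate_succ_apply', jtrans]
    rw [this, trans_isAct.iter]

/-- The join of `N + 1` copies of the group carries a system up to degree `N`. -/
lemma exists_join_system (ν p N : ℕ) : ∃ Φ : (Fin ν → ℕ) → Chain (ℕ × G ν p),
    IsSystem p jtrans N Φ ∧ ∀ n, ∑ i, n i ≤ N → Φ n ∈ supp (inc ν p 0 (N + 1) (∑ i, n i + 1)) := by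
  have key : ∃ Φ : (Fin ν → ℕ) → Chain (ℕ × G ν p), ∀ n, ∑ i, n i < N + 1 →
      Φ n ∈ supp (inc ν p 0 (N + 1) (∑ i, n i + 1)) ∧
        bd (Φ n) = (if n = 0 then bs [] else 0) + dsum p (tp jtrans) Φ n := by
    refine exists_family jtrans_isAct _ (fun k => supp (inc ν p 0 (N + 1) k)) (N + 1) ?_ ?_ ?_ ?_
    · intro k i c hc
      refine map_mem _ _ _ ?_ hc
      rintro l ⟨h1, h2, h3⟩
      rw [push_bs]
      refine bs_mem ⟨by simp [h1], ?_, ?_⟩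
      · rw [List.pairwise_map]; exact h2
      · intro v hv
        obtain ⟨w, hw, rfl⟩ := List.mem_map.1 hv
        exact h3 w hw
    · intro n _
      split_ifs with h0
      · subst h0
        exact bs_mem ⟨by simp, by simp, by simp⟩
      · simp
    · intro n _
      have h1 : bd (if n = 0 then bs [] else 0 : Chain (ℕ × G ν p)) = 0 := by
        split_ifs <;> simp
      rw [h1, zero_add]
      refine Finset.sum_eq_zero fun i _ => ?_
      beta_reduce
      split_ifs with h0
      · have : n i ≤ 1 := by
          have := congrFun h0 i
          simp [low] at this
          omega
        interval_cases h2 : n i <;> simp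
      · simp
    · intro k hk c hc hbd
      refine ⟨lin (contr 0) c, map_mem _ _ _ (fun l hl => ?_) hc, ?_⟩
      · rw [lin_bs]
        exact contr_mem l 0 k (by omega) hl
      · have := eq_on_supp (bd ∘ₗ lin (contr 0) + lin (contr 0) ∘ₗ bd : Chain (ℕ × G ν p) →ₗ[ℤ] _)
            LinearMap.id _ (fun l hl => by
          simpa using bd_contr l 0 hl.2.1 fun v _ => Nat.zero_le _) hc
        simpa [hbd] using this
  obtain ⟨Φ, hΦ⟩ := key
  refine ⟨Φ, fun n hn => ?_, fun n hn => (hΦ n (by omega)).1⟩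
  rw [(hΦ n (by omega)).2, add_comm]

end join

end Tverberg

/-! ### Barycentric subdivision and the geometric join -/

namespace Tverberg

section bsd

variable {E : Type*} [NormedAddCommGroup E] [NormedSpace ℝ E]

/-- The barycenter of a list of points. -/
noncomputable def bary (l : List E) : E := (l.length : ℝ)⁻¹ • l.sum

/-- Barycentric subdivision of chains made of lists of length `k`, that is, of affine simplices of
dimension `k - 1`. -/
noncomputable def bsd : ℕ → Chain E →ₗ[ℤ] Chain E
  | 0 => LinearMap.id
  | k + 1 => lin fun l => cone (bary l) (bsd k (bdL l))

lemma bd_bsd (k : ℕ) (c : Chain E) : bd (bsd (k + 1) c) = bsd k (bd c) := by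
  induction k generalizing c with
  | zero =>
    have : bd ∘ₗ bsd 1 = bsd 0 ∘ₗ (bd : Chain E →ₗ[ℤ] _) := hom_ext fun l => by
      simp [bsd, bd_cone, ← bd_bs, bd_bd]
    exact LinearMap.congr_fun this c
  | succ k ih =>
    have : bd ∘ₗ bsd (k + 2) = bsd (k + 1) ∘ₗ (bd : Chain E →ₗ[ℤ] _) := hom_ext fun l => by
      rw [LinearMap.comp_apply, bsd, lin_bs, bd_cone, ih, ← bd_bs, bd_bd]
      simp
    exact LinearMap.congr_fun this c

lemma push_bsd (g : E →ₗ[ℝ] E) (k : ℕ) (c : Chain E) : push g (bsd k c) = bsd k (push g c) := by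
  induction k generalizing c with
  | zero => rfl
  | succ k ih =>
    have : push g ∘ₗ bsd (k + 1) = bsd (k + 1) ∘ₗ push g := hom_ext fun l => by
      have : bary (l.map g) = g (bary l) := by
        simp [bary, map_list_sum]
      rw [LinearMap.comp_apply, LinearMap.comp_apply, bsd, lin_bs, push_bs, lin_bs, this,
        push_cone, ih, ← bd_bs, ← bd_bs, push_bd, push_bs]
    exact LinearMap.congr_fun this c

lemma norm_sum_sub (l : List E) (x : E) (d : ℝ) (h : ∀ y ∈ l, dist y x ≤ d) :
    ‖l.sum - (l.length : ℝ) • x‖ ≤ l.length * d := by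
  induction l with
  | nil => simp
  | cons y l ih =>
    have h1 := ih fun z hz => h z (by simp [hz])
    have h2 : ‖y - x‖ ≤ d := by rw [← dist_eq_norm]; exact h y (by simp)
    have : (y :: l).sum - ((y :: l).length : ℝ) • x = (y - x) + (l.sum - (l.length : ℝ) • x) := by
      simp [add_smul]; abel
    rw [this]
    refine (norm_add_le _ _).trans ?_
    simp only [List.length_cons, Nat.cast_add, Nat.cast_one]
    linarith

lemma dist_bary (N : ℕ) (l : List E) (hl : l.length ≤ N + 1) (d : ℝ)
    (h : ∀ x ∈ l, ∀ y ∈ l, dist x y ≤ d) (x : E) (hx : x ∈ l) :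
    dist x (bary l) ≤ (N / (N + 1) : ℝ) * d := by
  classical
  have hd : 0 ≤ d := by simpa using h x hx x hx
  have hp := List.perm_cons_erase hx
  have h1 : l.length = (l.erase x).length + 1 := by simpa using hp.length_eq
  have h2 := norm_sum_sub (l.erase x) x d fun y hy => h y (List.mem_of_mem_erase hy) x hx
  set n := (l.erase x).length with hn
  have h3 : bary l - x = ((n : ℝ) + 1)⁻¹ • ((l.erase x).sum - (n : ℝ) • x) := by
    have hn0 : (n : ℝ) + 1 ≠ 0 := by positivity
    rw [bary, hp.sum_eq, h1]
    push_cast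
    rw [eq_inv_smul_iff₀ hn0, smul_sub, smul_inv_smul₀ hn0]
    simp [add_smul]
    abel
  rw [dist_comm, dist_eq_norm, h3, norm_smul, Real.norm_of_nonneg (by positivity)]
  calc ((n : ℝ) + 1)⁻¹ * ‖(l.erase x).sum - (n : ℝ) • x‖ ≤ ((n : ℝ) + 1)⁻¹ * (n * d) := by gcongr
    _ = (n / (n + 1) : ℝ) * d := by ring
    _ ≤ (N / (N + 1) : ℝ) * d := by
      gcongr ?_ * _
      rw [div_le_div_iff₀ (by positivity) (by positivity)]
      have : (n : ℝ) ≤ N := by exact_mod_cast (by omega : n ≤ N)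
      nlinarith

/-- Lists of length `k` of points of `C` with mutual distances at most `d`. -/
def fine (k : ℕ) (C : Set E) (d : ℝ) : Set (List E) :=
  {l | l.length = k ∧ (∀ x ∈ l, x ∈ C) ∧ ∀ x ∈ l, ∀ y ∈ l, dist x y ≤ d}

/-- One barycentric subdivision shrinks simplices by the factor `N / (N + 1)`. -/
lemma bsd_fine (N : ℕ) (C : Set E) (hC : Convex ℝ C) (k : ℕ) (hk : k ≤ N + 1) (d : ℝ) (l : List E)
    (hl : l ∈ fine k C d) : bsd k (bs l) ∈ supp (fine k C ((N / (N + 1) : ℝ) * d)) := by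
  suffices h : ∀ k ≤ N + 1, ∀ l ∈ fine k C d, bsd k (bs l) ∈
      supp (fine k (convexHull ℝ {x | x ∈ l}) ((N / (N + 1) : ℝ) * d)) by
    refine supp_mono ?_ (h k hk l hl)
    rintro l' ⟨h1, h2, h3⟩
    exact ⟨h1, fun x hx => convexHull_min (fun y hy => hl.2.1 y hy) hC (h2 x hx), h3⟩
  clear hl l hk k
  intro k
  induction k with
  | zero =>
    rintro hk l ⟨h1, -, -⟩
    obtain rfl := List.length_eq_zero_iff.1 h1
    exact bs_mem ⟨rfl, by simp, by simp⟩
  | succ k ih =>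
    rintro hk l ⟨h1, h2, h3⟩
    have hball : convexHull ℝ {x | x ∈ l} ⊆ Metric.closedBall (bary l) ((N / (N + 1) : ℝ) * d) :=
      convexHull_min (fun x hx => dist_bary N l (by omega) d h3 x hx) (convex_closedBall _ _)
    have hne : l ≠ [] := by rintro rfl; simp at h1
    have hb : bary l ∈ convexHull ℝ {x | x ∈ l} := by
      have hl0 : (l.length : ℝ) ≠ 0 := by simpa using hne
      have : bary l = ∑ i : Fin l.length, (l.length : ℝ)⁻¹ • l.get i := by
        rw [bary, ← Finset.smul_sum]
        congr 1
        rw [← List.sum_ofFn, List.ofFn_get]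
      rw [this]
      refine (convex_convexHull ℝ _).sum_mem (fun _ _ => by positivity) (by simp [hl0]) ?_
      intro i _
      exact subset_convexHull ℝ _ (List.get_mem l i)
    rw [bsd, lin_bs, ← bd_bs]
    have hstep : bsd k (bd (bs l)) ∈
        supp (fine k (convexHull ℝ {x | x ∈ l}) ((N / (N + 1) : ℝ) * d)) := by
      refine map_mem _ _ _ ?_ (bd_mem l)
      rintro l' ⟨h4, h5⟩
      refine supp_mono ?_ (ih (by omega) l' ⟨by omega, fun x hx => h2 x (h5.subset hx),
        fun x hx y hy => h3 x (h5.subset hx) y (h5.subset hy)⟩)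
      rintro l'' ⟨h6, h7, h8⟩
      exact ⟨h6, fun x hx => convexHull_mono (fun y hy => h5.subset hy) (h7 x hx), h8⟩
    refine map_mem _ _ _ ?_ hstep
    rintro l' ⟨h4, h5, h6⟩
    rw [cone_bs]
    refine bs_mem ⟨by simp [h4], ?_, ?_⟩
    · intro x hx
      rcases List.mem_cons.1 hx with rfl | hx
      · exact hb
      · exact h5 x hx
    · intro x hx y hy
      rcases List.mem_cons.1 hx with rfl | hx <;> rcases List.mem_cons.1 hy with rfl | hy
      · exact (dist_comm _ _).trans_le (hball hb)
      · rw [dist_comm]; exact hball (h5 y hy)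
      · exact hball (h5 x hx)
      · exact h6 x hx y hy

/-- The `t`-fold barycentric subdivision of chains made of lists of length `k`. -/
noncomputable def bsdp : ℕ → ℕ → Chain E →ₗ[ℤ] Chain E
  | 0, _ => LinearMap.id
  | t + 1, k => bsd k ∘ₗ bsdp t k

lemma bsdp_zero (t : ℕ) (c : Chain E) : bsdp t 0 c = c := by
  induction t with
  | zero => rfl
  | succ t ih => rw [bsdp, LinearMap.comp_apply, ih]; rfl

lemma bsdp_fine (N : ℕ) (C : Set E) (hC : Convex ℝ C) (k : ℕ) (hk : k ≤ N + 1) (d : ℝ)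
    (t : ℕ) (c : Chain E) (hc : c ∈ supp (fine k C d)) :
    bsdp t k c ∈ supp (fine k C ((N / (N + 1) : ℝ) ^ t * d)) := by
  induction t with
  | zero => simpa [bsdp] using hc
  | succ t ih =>
    rw [bsdp, LinearMap.comp_apply]
    refine map_mem _ _ _ (fun l hl => ?_) ih
    rw [pow_succ', mul_assoc]
    exact bsd_fine N C hC k hk _ l hl

lemma bd_bsdp (t k : ℕ) (c : Chain E) : bd (bsdp t (k + 1) c) =
    bsdp t k (bd c) := by
  induction t with
  | zero => rfl
  | succ t ih =>
    rw [bsdp, LinearMap.comp_apply, bd_bsd, ih, bsdp, LinearMap.comp_apply]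

lemma push_bsdp (g : E →ₗ[ℝ] E) (t k : ℕ) (c : Chain E) :
    push g (bsdp t k c) =
      bsdp t k (push g c) := by
  induction t with
  | zero => rfl
  | succ t ih =>
    rw [bsdp, LinearMap.comp_apply, push_bsd, ih, LinearMap.comp_apply]

lemma IsSystem.bsdp {ν p N : ℕ} {Φ : (Fin ν → ℕ) → Chain E} (τ : Fin ν → E →ₗ[ℝ] E)
    (h : IsSystem p (fun i => ⇑(τ i)) N Φ) (t : ℕ) :
    IsSystem p (fun i => ⇑(τ i)) N fun n => Tverberg.bsdp t (∑ i, n i + 1) (Φ n) :=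
  h.map (Tverberg.bsdp t) (fun _ => ⊤) (fun _ _ => trivial) (fun _ _ _ _ => trivial)
    (fun k c => bd_bsdp t k c) (bsdp_zero t _) (fun k i c _ => (push_bsdp (τ i) t k c).symm)

end bsd

/-- A system supported on a subset that is closed under the action restricts to that subset. -/
lemma IsSystem.restrict {α : Type*} {ν p N : ℕ} {Φ : (Fin ν → ℕ) → Chain α}
    {τ : Fin ν → α → α} {S : Set α} {τ' : Fin ν → S → S} (hτ : ∀ i x, (τ' i x : α) = τ i x)
    (x₀ : S) (h : IsSystem p τ N Φ) (T : ℕ → Set (List α))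
    (hT : ∀ n, ∑ i, n i ≤ N → Φ n ∈ supp (T (∑ i, n i + 1)))
    (hS : ∀ k, ∀ l ∈ T k, ∀ x ∈ l, x ∈ S) :
    ∃ Φ' : (Fin ν → ℕ) → Chain S, IsSystem p τ' N Φ' ∧
      ∀ n, ∑ i, n i ≤ N → Φ' n ∈ supp {l | l.map Subtype.val ∈ T (∑ i, n i + 1)} := by
  classical
  obtain ⟨ret, hret⟩ : ∃ ret : α → S, ∀ x : S, ret x = x :=
    ⟨fun x => if h : x ∈ S then ⟨x, h⟩ else x₀, fun x => dif_pos x.2⟩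
  have hτS : ∀ i, ∀ x ∈ S, τ i x ∈ S := fun i x hx => hτ i ⟨x, hx⟩ ▸ (τ' i ⟨x, hx⟩).2
  refine ⟨fun n => push ret (Φ n), ?_, ?_⟩
  · refine h.map (τ' := τ') (fun _ => push ret) (fun _ => supp {l | ∀ x ∈ l, x ∈ S}) ?_ ?_
      (fun _ c => (push_bd _ c).symm) (by simp) ?_
    · exact fun n hn => supp_mono (fun l hl => hS _ l hl) (hT n hn)
    · intro _ i c hc
      refine map_mem _ _ _ (fun l hl => ?_) hc
      rw [push_bs]
      refine bs_mem fun x hx => ?_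
      obtain ⟨y, hy, rfl⟩ := List.mem_map.1 hx
      exact hτS i y (hl y hy)
    · intro _ i c hc
      refine eq_on_supp (push ret ∘ₗ push (τ i)) (push (τ' i) ∘ₗ push ret) _ ?_ hc
      intro l hl
      simp only [LinearMap.comp_apply, push_bs, List.map_map]
      congr 1
      refine List.map_congr_left fun x hx => ?_
      simp only [Function.comp_apply]
      have h1 := hret ⟨x, hl x hx⟩
      have h2 := hret (τ' i ⟨x, hl x hx⟩)
      rw [hτ] at h2
      rw [h1, h2]
  · intro n hn
    refine map_mem _ _ _ ?_ (hT n hn)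
    intro l hl
    rw [push_bs]
    refine bs_mem ?_
    have : (l.map ret).map Subtype.val = l := by
      rw [List.map_map]
      conv_rhs => rw [← List.map_id l]
      refine List.map_congr_left fun x hx => ?_
      exact congrArg Subtype.val (hret ⟨x, hS _ l hl x hx⟩)
    rw [Set.mem_ofPred_eq, this]
    exact hl

section join

variable {ν p : ℕ} [NeZero p] {ι : Type*} [Fintype ι]

/-- The geometric realization of the join of `ι`-many copies of the discrete space `(ℤ/p)^ν`. A
point is a system of weights with at most one nonzero weight in each row. -/
def joinSet (ν p : ℕ) [NeZero p] (ι : Type*) [Fintype ι] : Set (ι → G ν p → ℝ) :=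
  {x | (∀ i g, 0 ≤ x i g) ∧ ∑ i, ∑ g, x i g = 1 ∧ ∀ i g g', x i g ≠ 0 → x i g' ≠ 0 → g = g'}

/-- Translation of the labels by `h`. -/
def shift (h : G ν p) : (ι → G ν p → ℝ) →ₗ[ℝ] (ι → G ν p → ℝ) where
  toFun x := fun i g => x i (g - h)
  map_add' _ _ := rfl
  map_smul' _ _ := rfl

omit [NeZero p] [Fintype ι] in
lemma shift_apply (h : G ν p) (x : ι → G ν p → ℝ) (i : ι) (g : G ν p) :
    shift h x i g = x i (g - h) := rfl

lemma shift_mem (h : G ν p) {x : ι → G ν p → ℝ} (hx : x ∈ joinSet ν p ι) :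
    shift h x ∈ joinSet ν p ι := by
  obtain ⟨h1, h2, h3⟩ := hx
  refine ⟨fun i g => h1 _ _, ?_, fun i g g' hg hg' => ?_⟩
  · rw [← h2]
    refine Finset.sum_congr rfl fun i _ => ?_
    exact (Equiv.subRight h).sum_comp (x i)
  · exact sub_left_injective (h3 i _ _ hg hg')

/-- The action of the `i`-th generator of `(ℤ/p)^ν` on the join. -/
def jact (i : Fin ν) (x : joinSet ν p ι) : joinSet ν p ι :=
  ⟨shift (Pi.single i 1) x.1, shift_mem _ x.2⟩

/-- The face of the join determined by a choice of label in each row. -/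
def jface (s : ι → G ν p) : Set (ι → G ν p → ℝ) :=
  {x | (∀ i g, 0 ≤ x i g) ∧ ∑ i, ∑ g, x i g = 1 ∧ ∀ i g, x i g ≠ 0 → s i = g}

lemma jface_subset (s : ι → G ν p) : jface s ⊆ joinSet ν p ι := by
  rintro x ⟨h1, h2, h3⟩
  exact ⟨h1, h2, fun i g g' hg hg' => (h3 i g hg).symm.trans (h3 i g' hg')⟩

lemma jface_convex (s : ι → G ν p) : Convex ℝ (jface s) := by
  rintro x ⟨h1, h2, h3⟩ y ⟨h4, h5, h6⟩ a b ha hb hab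
  refine ⟨fun i g => ?_, ?_, fun i g hg => ?_⟩
  · have := h1 i g
    have := h4 i g
    simp only [Pi.add_apply, Pi.smul_apply, smul_eq_mul]
    positivity
  · simp only [Pi.add_apply, Pi.smul_apply, smul_eq_mul, Finset.sum_add_distrib,
      ← Finset.mul_sum, h2, h5]
    linarith
  · by_contra hs
    apply hg
    have e1 : x i g = 0 := by by_contra h; exact hs (h3 i g h)
    have e2 : y i g = 0 := by by_contra h; exact hs (h6 i g h)
    simp [e1, e2]

/-- The vertex of the join with a given row and label; `e` numbers the rows. -/
def vert (e : ι → ℕ) (v : ℕ × G ν p) : ι → G ν p → ℝ :=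
  fun i g => if e i = v.1 ∧ g = v.2 then 1 else 0

lemma vert_mem {N : ℕ} (e : ι ≃ Fin (N + 1)) {k : ℕ} {l : List (ℕ × G ν p)}
    (hl : l ∈ inc ν p 0 (N + 1) k) :
    ∃ s, l.map (vert fun i => (e i : ℕ)) ∈ fine k (jface (ι := ι) s) 1 := by
  classical
  obtain ⟨h1, h2, h3⟩ := hl
  have h4 : ∀ u ∈ l, ∀ v ∈ l, u.1 = v.1 → u = v := by
    have : Std.Symm (fun u v : ℕ × G ν p => u.1 = v.1 → u = v) :=
      ⟨fun u v h h' => (h h'.symm).symm⟩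
    have := List.Pairwise.forall_of_forall (R := fun u v : ℕ × G ν p => u.1 = v.1 → u = v)
      (l := l) (fun u _ _ => rfl) (h2.imp fun h h' => absurd h' h.ne)
    exact fun u hu v hv => this hu hv
  refine ⟨fun i => if h : ∃ g, ((e i : ℕ), g) ∈ l then h.choose else 0, by simp [h1], ?_, ?_⟩
  · intro x hx
    obtain ⟨v, hv, rfl⟩ := List.mem_map.1 hx
    refine ⟨fun i g => ?_, ?_, fun i g hg => ?_⟩
    · unfold vert; split_ifs <;> simp
    · have hi : ∀ i, (e i : ℕ) = v.1 ↔ i = e.symm ⟨v.1, (h3 v hv).2⟩ := by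
        intro i
        rw [Equiv.eq_symm_apply, Fin.ext_iff]
      simp [vert, hi, ite_and]
    · have h5 : (e i : ℕ) = v.1 ∧ g = v.2 := by
        by_contra h; exact hg (if_neg h)
      have h6 : ∃ g, ((e i : ℕ), g) ∈ l := ⟨v.2, by rw [h5.1]; exact hv⟩
      beta_reduce
      rw [dif_pos h6, h5.2]
      exact congrArg Prod.snd (h4 _ h6.choose_spec _ hv h5.1)
  · intro x hx y hy
    obtain ⟨v, hv, rfl⟩ := List.mem_map.1 hx
    obtain ⟨w, hw, rfl⟩ := List.mem_map.1 hy
    refine (dist_pi_le_iff zero_le_one).2 fun i => (dist_pi_le_iff zero_le_one).2 fun g => ?_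
    unfold vert
    split_ifs <;> simp

lemma exists_coarse_system {N : ℕ} (e : ι ≃ Fin (N + 1)) :
    ∃ Φ : (Fin ν → ℕ) → Chain (ι → G ν p → ℝ),
      IsSystem p (fun i => ⇑(shift (ι := ι) (p := p) (Pi.single i 1))) N Φ ∧
      ∀ n, ∑ i, n i ≤ N → Φ n ∈ supp {l | ∃ s, l ∈ fine (∑ i, n i + 1) (jface s) 1} := by
  obtain ⟨Φ₀, hs₀, hm₀⟩ := exists_join_system ν p N
  refine ⟨fun n => push (vert fun i => (e i : ℕ)) (Φ₀ n), ?_, fun n hn => ?_⟩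
  · refine hs₀.map (τ' := fun i => ⇑(shift (ι := ι) (p := p) (Pi.single i 1)))
      (fun _ => push _) (fun _ => ⊤) (fun _ _ => trivial) (fun _ _ _ _ => trivial)
      (fun _ c => (push_bd _ c).symm) (by simp) ?_
    intro _ i c _
    rw [push_push, push_push]
    congr 2
    funext v j g
    simp [vert, jtrans, trans, shift_apply, sub_eq_iff_eq_add, add_comm]
  · refine map_mem _ _ _ (fun l hl => ?_) (hm₀ n hn)
    rw [push_bs]
    exact bs_mem (vert_mem e hl)

lemma exists_fine_system {N : ℕ} (e : ι ≃ Fin (N + 1)) (ε : ℝ) (hε : 0 < ε) :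
    ∃ Φ : (Fin ν → ℕ) → Chain (ι → G ν p → ℝ),
      IsSystem p (fun i => ⇑(shift (ι := ι) (p := p) (Pi.single i 1))) N Φ ∧
      ∀ n, ∑ i, n i ≤ N → Φ n ∈ supp {l | ∃ s, l ∈ fine (∑ i, n i + 1) (jface s) ε} := by
  obtain ⟨Φ, hs, hm⟩ := exists_coarse_system (ν := ν) (p := p) e
  obtain ⟨t, ht⟩ : ∃ t : ℕ, (N / (N + 1) : ℝ) ^ t < ε :=
    exists_pow_lt_of_lt_one hε ((div_lt_one (by positivity)).2 (by linarith))
  refine ⟨_, hs.bsdp _ t, fun n hn => map_mem _ _ _ ?_ (hm n hn)⟩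
  rintro l ⟨s, hl⟩
  refine supp_mono ?_ (bsdp_fine N _ (jface_convex s) _ (by omega) 1 t _ (bs_mem hl))
  rintro l' ⟨h1, h2, h3⟩
  exact ⟨s, h1, h2, fun x hx y hy => (h3 x hx y hy).trans (by rw [mul_one]; exact ht.le)⟩

/-- The geometric join carries systems made of arbitrarily small simplices. -/
theorem exists_small_system (N : ℕ) (hN : Fintype.card ι = N + 1) (ε : ℝ) (hε : 0 < ε) :
    ∃ Φ : (Fin ν → ℕ) → Chain (joinSet ν p ι), IsSystem p jact N Φ ∧
      ∀ n, ∑ i, n i ≤ N → Φ n ∈ supp {l | l.length = ∑ i, n i + 1 ∧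
        ∀ x ∈ l, ∀ y ∈ l, dist x y ≤ ε} := by
  classical
  let e : ι ≃ Fin (N + 1) := Fintype.equivFinOfCardEq hN
  obtain ⟨Φ, hs, hm⟩ := exists_fine_system (ν := ν) (p := p) e ε hε
  obtain ⟨x₀, hx₀⟩ : (joinSet ν p ι).Nonempty := by
    obtain ⟨s, h⟩ := vert_mem (ν := ν) (p := p) e (k := 1) (l := [(0, 0)])
      ⟨rfl, by simp, by simp⟩
    exact ⟨vert (fun i => (e i : ℕ)) (0, 0), jface_subset s (h.2.1 _ (by simp))⟩
  obtain ⟨Φ', h1, h2⟩ := hs.restrict (τ' := jact) (fun _ _ => rfl) ⟨x₀, hx₀⟩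
    (fun k => {l | ∃ s, l ∈ fine k (jface s) ε}) hm
    (fun k l ⟨s, hl⟩ x hx => jface_subset s (hl.2.1 x hx))
  refine ⟨Φ', h1, fun n hn => supp_mono ?_ (h2 n hn)⟩
  rintro l ⟨s, h3, -, h4⟩
  exact ⟨by simpa using h3, fun x hx y hy =>
    h4 x (List.mem_map_of_mem hx) y (List.mem_map_of_mem hy)⟩

end join

end Tverberg

/-! ### Common zeros of functions transforming by characters -/

namespace Tverberg

section analytic

/-- A cup product of `n` cochains vanishes on a list of length `2 n + 1` as soon as one of the
factors vanishes on all triples of points of the list. -/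
lemma cup_eq_zero {α : Type*} (fs : List (α → α → α → ℤ)) (l : List α)
    (hl : l.length = 2 * fs.length + 1) (f : α → α → α → ℤ) (hf : f ∈ fs)
    (h : ∀ x ∈ l, ∀ y ∈ l, ∀ z ∈ l, f x y z = 0) : cup fs (bs l) = 0 := by
  induction fs generalizing l with
  | nil => simp at hf
  | cons f' fs ih =>
    match l, hl with
    | [], hl => simp at hl
    | [x], hl => simp at hl
    | [x, y], hl => simp at hl
    | x :: y :: z :: l, hl =>
      simp only [cup, LinearMap.comp_apply, cap2, lin_bs, map_smul]
      rcases List.mem_cons.1 hf with rfl | hf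
      · rw [h x (by simp) y (by simp) z (by simp), zero_smul]
      · rw [ih (z :: l) (by simp at hl ⊢; omega) hf, smul_zero]
        intro x hx y hy w hw
        exact h x (by aesop) y (by aesop) w (by aesop)

variable {ν p : ℕ} [NeZero p] {X : Type*}

/-- The angle, in turns, of the invariant function obtained by rotating `F x` back by the value of
the character `a` at the label of `x`. -/
noncomputable def theta (γ : X → G ν p) (a : G ν p) (F : X → ℂ) (x : X) : ℝ :=
  (F x * ZMod.stdAddChar (-chi a (γ x))).arg / (2 * Real.pi)

/-- The angle from `F x` to `F y`, in turns, minus the value predicted by the labels through the lift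
`cc a` and corrected by the difference of `theta`. For nonzero `F x` and `F y` this is an integer, so
that rounding only casts it to `ℤ`. -/
noncomputable def kap (γ : X → G ν p) (a : G ν p) (F : X → ℂ) (x y : X) : ℤ :=
  round ((F y / F x).arg / (2 * Real.pi) - cc a (γ y - γ x) / p -
    (theta γ a F y - theta γ a F x))

lemma exp_arg_div (z : ℂ) (hz : z ≠ 0) :
    Complex.exp (2 * Real.pi * Complex.I * ((z.arg / (2 * Real.pi) : ℝ) : ℂ)) = z / ‖z‖ := by
  have h0 : (‖z‖ : ℂ) ≠ 0 := by simpa using hz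
  rw [eq_div_iff h0, mul_comm]
  conv_rhs => rw [← Complex.norm_mul_exp_arg_mul_I z]
  congr 2
  have : (Real.pi : ℂ) ≠ 0 := by exact_mod_cast Real.pi_ne_zero
  push_cast
  field_simp

lemma exp_cc (a g : G ν p) :
    Complex.exp (2 * Real.pi * Complex.I * ((cc a g / p : ℝ) : ℂ)) = ZMod.stdAddChar (chi a g) := by
  rw [← cc_cast, ZMod.stdAddChar_coe]
  congr 1
  push_cast
  ring

lemma stdAddChar_ne_zero (g : ZMod p) : (ZMod.stdAddChar g : ℂ) ≠ 0 := by
  rw [← norm_ne_zero_iff, ZMod.stdAddChar_apply, Circle.norm_coe]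
  exact one_ne_zero

/-- Rounding in `kap` is exact where `F` does not vanish. -/
lemma kap_eq (γ : X → G ν p) (a : G ν p) (F : X → ℂ) (x y : X) (hx : F x ≠ 0) (hy : F y ≠ 0) :
    (kap γ a F x y : ℝ) = (F y / F x).arg / (2 * Real.pi) - cc a (γ y - γ x) / p -
      (theta γ a F y - theta γ a F x) := by
  set R : ℝ := (F y / F x).arg / (2 * Real.pi) - cc a (γ y - γ x) / p -
      (theta γ a F y - theta γ a F x) with hR
  have hn : ∀ g : ZMod p, ‖(ZMod.stdAddChar g : ℂ)‖ = 1 := fun g => by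
    rw [ZMod.stdAddChar_apply, Circle.norm_coe]
  have hne := stdAddChar_ne_zero (p := p)
  have h1 : Complex.exp (2 * Real.pi * Complex.I * (R : ℂ)) = 1 := by
    rw [hR]
    simp only [theta]
    rw [Complex.ofReal_sub, Complex.ofReal_sub, Complex.ofReal_sub, mul_sub, mul_sub, mul_sub,
      Complex.exp_sub, Complex.exp_sub, Complex.exp_sub, exp_arg_div _ (div_ne_zero hy hx), exp_cc,
      exp_arg_div _ (mul_ne_zero hy (hne _)), exp_arg_div _ (mul_ne_zero hx (hne _)), chi_sub,
      AddChar.map_neg_eq_inv, AddChar.map_neg_eq_inv, AddChar.map_sub_eq_div]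
    simp only [norm_mul, norm_div, norm_inv, hn, inv_one, mul_one]
    have h2 := hne (chi a (γ x))
    have h3 := hne (chi a (γ y))
    have h4 : ((‖F x‖ : ℝ) : ℂ) ≠ 0 := by simpa using hx
    have h5 : ((‖F y‖ : ℝ) : ℂ) ≠ 0 := by simpa using hy
    push_cast
    field_simp
  obtain ⟨n, hn⟩ := Complex.exp_eq_one_iff.1 h1
  have h2 : (R : ℂ) = n := by
    have : (2 * Real.pi * Complex.I : ℂ) ≠ 0 := by
      simp [Real.pi_ne_zero]
    apply mul_left_cancel₀ this
    rw [hn]; ring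
  have h3 : R = n := by exact_mod_cast h2
  rw [kap, ← hR, h3, round_intCast]

/-- On triples of points whose `F`-values are within a right angle of each other, the Bockstein of
`a` is the coboundary of `-kap`. -/
lemma bock_add_cobd_kap (γ : X → G ν p) (a : G ν p) (F : X → ℂ) (x y z : X) (hx : F x ≠ 0)
    (hxy : 0 < (F y / F x).re) (hyz : 0 < (F z / F y).re) :
    bock a (γ x) (γ y) (γ z) + cobd (kap γ a F) x y z = 0 := by
  have hy : F y ≠ 0 := by rintro h; simp [h] at hxy
  have hz : F z ≠ 0 := by rintro h; simp [h] at hyz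
  have harg : (F z / F x).arg = (F y / F x).arg + (F z / F y).arg := by
    rw [← Complex.arg_mul (div_ne_zero hy hx) (div_ne_zero hz hy), div_mul_div_comm, mul_comm (F x),
      mul_div_mul_left _ _ hy]
    have h1 := abs_lt.1 (Complex.abs_arg_lt_pi_div_two_iff.2 (Or.inl hxy))
    have h2 := abs_lt.1 (Complex.abs_arg_lt_pi_div_two_iff.2 (Or.inl hyz))
    constructor <;> linarith
  have hb : (p : ℝ) * bock a (γ x) (γ y) (γ z) =
      cc a (γ y - γ x) + cc a (γ z - γ y) - cc a (γ z - γ x) := by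
    exact_mod_cast bock_mul a (γ x) (γ y) (γ z)
  have hp : (p : ℝ) ≠ 0 := by exact_mod_cast NeZero.ne p
  have : ((bock a (γ x) (γ y) (γ z) + cobd (kap γ a F) x y z : ℤ) : ℝ) = 0 := by
    simp only [cobd]
    push_cast
    rw [kap_eq γ a F x y hx hy, kap_eq γ a F y z hy hz, kap_eq γ a F x z hx hz, harg]
    rw [eq_div_of_mul_eq hp ((mul_comm _ _).trans hb)]
    ring
  exact_mod_cast this

lemma kap_inv {τ : Fin ν → X → X} (γ : X → G ν p) (hγ : ∀ i x, γ (τ i x) = Pi.single i 1 + γ x)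
    (a : G ν p) (F : X → ℂ) (hF : ∀ i x, F (τ i x) = ZMod.stdAddChar (a i) * F x) :
    Inv1 τ (kap γ a F) := by
  intro i x y
  have hne : (ZMod.stdAddChar (a i) : ℂ) ≠ 0 := stdAddChar_ne_zero _
  have hθ : ∀ x, theta γ a F (τ i x) = theta γ a F x := by
    intro x
    simp only [theta, hγ, hF, chi_add, chi_single, neg_add, AddChar.map_add_eq_mul,
      AddChar.map_neg_eq_inv]
    congr 2
    field_simp
  simp only [kap, hθ, hF, hγ, add_sub_add_left_eq_sub]
  rw [mul_div_mul_left _ _ hne]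

/-- A Borsuk–Ulam theorem for `(ℤ/p)^ν`: on a compact space with an equivariant labelling that
carries systems of arbitrarily small simplices in degrees up to `2 |Q|`, any `|Q|` complex functions
transforming by nontrivial characters have a common zero. -/
theorem exists_common_zero [Fact p.Prime] [PseudoMetricSpace X] [CompactSpace X] [Nonempty X]
    {τ : Fin ν → X → X} (γ : X → G ν p) (hγ : ∀ i x, γ (τ i x) = Pi.single i 1 + γ x)
    {Q : Type*} [Fintype Q] (a : Q → G ν p) (ha : ∀ q, a q ≠ 0) (F : Q → X → ℂ)
    (hc : ∀ q, Continuous (F q)) (hF : ∀ q i x, F q (τ i x) = ZMod.stdAddChar (a q i) * F q x)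
    {N : ℕ} (hN : N = 2 * Fintype.card Q)
    (hs : ∀ ε > 0, ∃ Φ : (Fin ν → ℕ) → Chain X, IsSystem p τ N Φ ∧
      ∀ n, ∑ i, n i ≤ N → Φ n ∈ supp {l | l.length = ∑ i, n i + 1 ∧
        ∀ x ∈ l, ∀ y ∈ l, dist x y ≤ ε}) :
    ∃ x, ∀ q, F q x = 0 := by
  by_contra! hcon
  have hFc : Continuous fun x q => F q x := continuous_pi hc
  -- the sup norm of the vector of values is bounded below by some `δ > 0`
  obtain ⟨x₀, -, hx₀⟩ := isCompact_univ.exists_isMinOn (Set.univ_nonempty (α := X))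
    hFc.norm.continuousOn
  set δ := ‖fun q => F q x₀‖ with hδ
  have hδ0 : 0 < δ := by
    rw [hδ, norm_pos_iff]
    obtain ⟨q, hq⟩ := hcon x₀
    exact fun h => hq (congrFun h q)
  have hδx : ∀ x, ∃ q, δ / 2 < ‖F q x‖ := by
    intro x
    by_contra! h
    have h1 : ‖fun q => F q x‖ ≤ δ / 2 := (pi_norm_le_iff_of_nonneg (by positivity)).2 h
    have h2 : δ ≤ ‖fun q => F q x‖ := hx₀ (Set.mem_univ x)
    linarith
  obtain ⟨η, hη, hu⟩ := Metric.uniformContinuous_iff.1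
    (CompactSpace.uniformContinuous_of_continuous hFc) (δ / 4) (by positivity)
  obtain ⟨Φ, hΦ, hm⟩ := hs (η / 2) (by positivity)
  obtain ⟨n, hn, hne⟩ := exists_cup_ne_zero γ hγ hΦ
    (fun n hn => supp_mono (fun l hl => hl.1) (hm n hn))
    (Finset.univ.toList.map fun q => (a q, kap γ (a q) (F q)))
    (by
      intro q' hq'
      obtain ⟨q, -, rfl⟩ := List.mem_map.1 hq'
      exact ⟨ha q, kap_inv γ hγ _ _ (hF q)⟩)
    (by simp [hN])
  refine hne ?_
  refine (map_mem _ _ ⊥ (fun l hl => ?_) (hm n hn.le))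
  obtain ⟨hl1, hl2⟩ := hl
  rw [Submodule.mem_bot, List.map_map]
  rcases l with _ | ⟨x, l'⟩
  · simp at hl1
  set l := x :: l' with hl
  obtain ⟨q, hq⟩ := hδx x
  have hclose : ∀ y ∈ l, ∀ z ∈ l, ‖F q z - F q y‖ < δ / 4 := by
    intro y hy z hz
    have := hu (a := z) (b := y) ((hl2 z hz y hy).trans_lt (by linarith))
    rw [← dist_eq_norm]
    exact (dist_le_pi_dist (fun q => F q z) (fun q => F q y) q).trans_lt this
  have hbig : ∀ y ∈ l, δ / 4 < ‖F q y‖ := by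
    intro y hy
    have h1 := hclose y hy x (by simp [hl])
    have h2 := norm_sub_norm_le (F q x) (F q y)
    linarith
  have hne0 : ∀ y ∈ l, F q y ≠ 0 := fun y hy h => by
    have := hbig y hy
    rw [h, norm_zero] at this
    linarith
  have hre : ∀ y ∈ l, ∀ z ∈ l, 0 < (F q z / F q y).re := by
    intro y hy z hz
    have h1 : ‖F q z / F q y - 1‖ < 1 := by
      rw [div_sub_one (hne0 y hy), norm_div, div_lt_one (norm_pos_iff.2 (hne0 y hy))]
      exact (hclose y hy z hz).trans (hbig y hy)
    have h2 := (abs_lt.1 ((Complex.abs_re_le_norm _).trans_lt h1)).1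
    simp at h2 ⊢
    linarith
  refine cup_eq_zero _ l (by simp [hl1, hn, hN]) _
    (List.mem_map.2 ⟨q, by simp, rfl⟩) fun x hx y hy z hz => ?_
  exact bock_add_cobd_kap γ (a q) (F q) x y z (hne0 x hx) (hre x hx y hy) (hre y hy z hz)

end analytic

end Tverberg

/-! ### The Borsuk–Ulam theorem for the join -/

namespace Tverberg

section borsukUlam

variable {ν p : ℕ} [NeZero p]

lemma sum_char (g : G ν p) (hg : g ≠ 0) : ∑ a : G ν p, (ZMod.stdAddChar (chi a g) : ℂ) = 0 := by
  let ψ : AddChar (G ν p) ℂ :=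
    { toFun := fun a => ZMod.stdAddChar (chi a g)
      map_zero_eq_one' := by simp [chi]
      map_add_eq_mul' := fun a b => by
        rw [← AddChar.map_add_eq_mul]
        simp [chi, add_mul, Finset.sum_add_distrib] }
  refine AddChar.sum_eq_zero_of_ne_one (ψ := ψ) fun h => hg ?_
  funext i
  have h1 : (ZMod.stdAddChar (chi (Pi.single i 1) g) : ℂ) = 1 := DFunLike.congr_fun h _
  have h2 : chi (Pi.single i 1) g = g i := by simp [chi, Pi.single_apply]
  rw [h2, ← AddChar.map_zero_eq_one (ZMod.stdAddChar (N := p))] at h1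
  exact ZMod.injective_stdAddChar h1

/-- A function on `(ℤ/p)^ν` whose nontrivial Fourier coefficients vanish is constant. -/
lemma eq_of_fourier (u : G ν p → ℂ)
    (hu : ∀ a : G ν p, a ≠ 0 → ∑ g, (ZMod.stdAddChar (chi a g) : ℂ) * u g = 0) (h h' : G ν p) :
    u h = u h' := by
  have key : ∀ h, (Fintype.card (G ν p) : ℂ) * u h = ∑ g, u g := by
    intro h
    have h1 : ∑ a : G ν p, (ZMod.stdAddChar (chi a (-h)) : ℂ) *
        ∑ g, (ZMod.stdAddChar (chi a g) : ℂ) * u g = ∑ g, u g := by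
      rw [Finset.sum_eq_single 0]
      · simp [chi]
      · intro a _ ha
        rw [hu a ha, mul_zero]
      · simp
    rw [← h1]
    simp_rw [Finset.mul_sum]
    rw [Finset.sum_comm, Finset.sum_eq_single h]
    · simp_rw [← mul_assoc, ← AddChar.map_add_eq_mul, ← chi_add]
      simp [chi]
    · intro g _ hg
      simp_rw [← mul_assoc, ← AddChar.map_add_eq_mul, ← chi_add]
      rw [← Finset.sum_mul, sum_char _ fun h0 => hg (neg_add_eq_zero.1 h0).symm, zero_mul]
    · simp
  have hc : (Fintype.card (G ν p) : ℂ) ≠ 0 := by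
    exact_mod_cast Fintype.card_ne_zero
  exact mul_left_cancel₀ hc ((key h).trans (key h').symm)

variable {ι : Type*} [Fintype ι]

/-- The join admits an equivariant labelling: the label of a point in a row selected by the set of
nonzero rows. -/
lemma exists_label : ∃ γ : joinSet ν p ι → G ν p, ∀ i x, γ (jact i x) = Pi.single i 1 + γ x := by
  classical
  let s : joinSet ν p ι → Set ι := fun x => {i | ∃ g, x.1 i g ≠ 0}
  have hs : ∀ x, (s x).Nonempty := by
    intro x
    by_contra! h
    have h1 : ∀ i g, x.1 i g = 0 := by
      intro i g
      by_contra h0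
      have : i ∈ s x := ⟨g, h0⟩
      rw [h] at this
      exact this
    have := x.2.2.1
    simp [h1] at this
  rcases isEmpty_or_nonempty ι with hι | hι
  · exact ⟨fun _ => 0, fun i x => (hι.false (hs x).some).elim⟩
  obtain ⟨c, hc⟩ : ∃ c : Set ι → ι, ∀ x, c (s x) ∈ s x :=
    ⟨fun t => if h : t.Nonempty then h.some else hι.some, fun x => by
      beta_reduce
      rw [dif_pos (hs x)]
      exact (hs x).some_mem⟩
  choose γ hγ using hc
  refine ⟨γ, fun i x => ?_⟩
  have h1 : s (jact i x) = s x := by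
    ext j
    constructor
    · rintro ⟨g, hg⟩
      exact ⟨_, hg⟩
    · rintro ⟨g, hg⟩
      refine ⟨g + Pi.single i 1, ?_⟩
      change x.1 j (g + Pi.single i 1 - Pi.single i 1) ≠ 0
      rwa [add_sub_cancel_right]
  have h2 : x.1 (c (s x)) (γ (jact i x) - Pi.single i 1) ≠ 0 := by
    have := hγ (jact i x)
    rw [h1] at this
    exact this
  have := x.2.2.2 _ _ _ h2 (hγ x)
  rw [← this]
  abel

lemma joinSet_closed : IsClosed (joinSet ν p ι) := by
  have : joinSet ν p ι = {x | ∀ i g, 0 ≤ x i g} ∩ {x | ∑ i, ∑ g, x i g = 1} ∩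
      {x | ∀ i g g', g ≠ g' → x i g * x i g' = 0} := by
    ext x
    simp only [joinSet, Set.mem_inter_iff, Set.mem_ofPred_eq, and_assoc]
    refine and_congr_right fun _ => and_congr_right fun _ => ?_
    refine forall_congr' fun i => forall_congr' fun g => forall_congr' fun g' => ?_
    rw [mul_eq_zero]
    tauto
  rw [this]
  refine (IsClosed.inter ?_ ?_).inter ?_
  · simp only [Set.ofPred_forall]
    exact isClosed_iInter fun i => isClosed_iInter fun g =>
      isClosed_le continuous_const (by fun_prop)
  · exact isClosed_eq (by fun_prop) continuous_const
  · simp only [Set.ofPred_forall]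
    exact isClosed_iInter fun i => isClosed_iInter fun g => isClosed_iInter fun g' =>
      isClosed_iInter fun _ => isClosed_eq (by fun_prop) continuous_const

lemma joinSet_compact : IsCompact (joinSet ν p ι) := by
  refine Metric.isCompact_of_isClosed_isBounded joinSet_closed ?_
  refine (Metric.isBounded_closedBall (x := 0) (r := 1)).subset fun x hx => ?_
  rw [mem_closedBall_zero_iff]
  refine (pi_norm_le_iff_of_nonneg zero_le_one).2 fun i =>
    (pi_norm_le_iff_of_nonneg zero_le_one).2 fun g => ?_
  rw [Real.norm_of_nonneg (hx.1 i g), ← hx.2.1]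
  exact (Finset.single_le_sum (f := fun g => x i g) (fun g _ => hx.1 i g) (Finset.mem_univ g)).trans
    (Finset.single_le_sum (f := fun i => ∑ g, x i g)
      (fun i _ => Finset.sum_nonneg fun g _ => hx.1 i g) (Finset.mem_univ i))

/-- Volovikov's theorem for the join of `2 (p^ν - 1) |L| + 1` copies of `(ℤ/p)^ν`: any `|L|`
continuous equivariant maps to the regular representation over `ℂ` are simultaneously constant
somewhere. -/
theorem join_borsuk_ulam [Fact p.Prime] {L : Type*} [Fintype L]
    (hι : Fintype.card ι = 2 * ((p ^ ν - 1) * Fintype.card L) + 1)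
    (H : L → (ι → G ν p → ℝ) → G ν p → ℂ) (hc : ∀ l g, Continuous fun x => H l x g)
    (hH : ∀ l h x g, H l (shift h x) g = H l x (g - h)) :
    ∃ x ∈ joinSet ν p ι, ∀ l g g', H l x g = H l x g' := by
  classical
  obtain ⟨γ, hγ⟩ := exists_label (ν := ν) (p := p) (ι := ι)
  have : CompactSpace (joinSet ν p ι) := isCompact_iff_compactSpace.1 joinSet_compact
  have : Nonempty (joinSet ν p ι) := by
    obtain ⟨j⟩ : Nonempty ι := Fintype.card_pos_iff.1 (by omega)
    refine ⟨fun i g => if i = j ∧ g = 0 then 1 else 0, fun i g => ?_, by simp [ite_and],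
      fun i g g' hg hg' => ?_⟩
    · beta_reduce; split_ifs <;> simp
    · simp only [ne_eq, ite_eq_right_iff, not_forall] at hg hg'
      rw [hg.1.2, hg'.1.2]
  obtain ⟨x, hx⟩ := exists_common_zero (X := joinSet ν p ι) (τ := jact) γ hγ
    (Q := {a : G ν p // a ≠ 0} × L) (fun q => q.1.1) (fun q => q.1.2)
    (fun q x => ∑ g, (ZMod.stdAddChar (chi q.1.1 g) : ℂ) * H q.2 x.1 g)
    (fun q => continuous_finsetSum _ fun g _ =>
      continuous_const.mul ((hc q.2 g).comp continuous_subtype_val))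
    (by
      intro q i x
      have h1 : ∀ g, H q.2 (jact i x).1 g = H q.2 x.1 (g - Pi.single i 1) :=
        fun g => hH q.2 _ x.1 g
      simp_rw [h1]
      rw [Finset.mul_sum, ← Equiv.sum_comp (Equiv.addRight (Pi.single i (1 : ZMod p) : G ν p))]
      refine Finset.sum_congr rfl fun g _ => ?_
      rw [Equiv.coe_addRight, add_sub_cancel_right, chi_add, chi_single, AddChar.map_add_eq_mul]
      ring)
    (N := 2 * ((p ^ ν - 1) * Fintype.card L))
    (by
      rw [Fintype.card_prod, Fintype.card_subtype_compl,
        Fintype.card_subtype_eq]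
      simp [ZMod.card])
    (fun ε hε => exists_small_system _ hι ε hε)
  exact ⟨x.1, x.2, fun l g g' => eq_of_fourier _ (fun a ha => hx (⟨a, ha⟩, l)) g g'⟩

end borsukUlam

end Tverberg

/-! ### Obstruction labels and Hall's theorem -/

namespace Tverberg

section labels

variable {J R V : Type*} [Fintype J] [Fintype R] [DecidableEq J] [DecidableEq V]

/-- `Matchable K S A`: the sets `A j`, `j ∈ S`, can be placed in distinct complexes of `K`. -/
def Matchable (K : R → Set (Finset V)) (S : Finset J) (A : J → Finset V) : Prop :=
  ∃ μ : J → R, Set.InjOn μ S ∧ ∀ j ∈ S, A j ∈ K (μ j)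

/-- Indices of large sets at which the greedy matching of the large sets, performed in the order
`ord`, may get stuck. -/
def stuck (K : R → Set (Finset V)) (k : ℕ) (ord : Finset V → ℕ) (A : J → Finset V) : Set J :=
  {j | k + 1 ≤ (A j).card ∧ ∃ S : Finset J,
    (∀ s ∈ S, k + 1 ≤ (A s).card ∧ ord (A s) < ord (A j)) ∧ Matchable K S A ∧
      ¬ Matchable K (insert j S) A}

open Classical in
/-- The obstruction label of a tuple: the indices of the oversized sets or, if there are none, of
those at which matching gets stuck. -/
def lab (K : R → Set (Finset V)) (k : ℕ) (ord : Finset V → ℕ) (A : J → Finset V) : Set J :=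
  if ∃ j, k + 2 ≤ (A j).card then {j | k + 2 ≤ (A j).card} else stuck K k ord A

variable {K : R → Set (Finset V)} {k : ℕ} {ord : Finset V → ℕ}

omit [Fintype J] [Fintype R] [DecidableEq J] [DecidableEq V] in
lemma matchable_congr {A B : J → Finset V} {S : Finset J} (h : ∀ j ∈ S, A j = B j) :
    Matchable K S A ↔ Matchable K S B := by
  refine exists_congr fun μ => and_congr_right fun _ => forall₂_congr fun j hj => ?_
  rw [h j hj]

omit [Fintype J] [Fintype R] [DecidableEq J] [DecidableEq V] in
lemma Matchable.comp {A : J → Finset V} {S : Finset J} (π : J ≃ J) (h : Matchable K S A) :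
    Matchable K (S.map π.symm.toEmbedding) (A ∘ π) := by
  obtain ⟨μ, h1, h2⟩ := h
  refine ⟨μ ∘ π, ?_, ?_⟩
  · intro i hi j hj hij
    simp only [Finset.coe_map, Set.mem_image] at hi hj
    obtain ⟨i, hi, rfl⟩ := hi
    obtain ⟨j, hj, rfl⟩ := hj
    simp only [Equiv.coe_toEmbedding, Function.comp_apply, Equiv.apply_symm_apply] at hij ⊢
    rw [h1 hi hj hij]
  · intro j hj
    obtain ⟨j', hj', rfl⟩ := Finset.mem_map.1 hj
    simpa using h2 j' hj'

omit [Fintype J] [Fintype R] [DecidableEq J] [DecidableEq V] in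
lemma matchable_comp {A : J → Finset V} {S : Finset J} (π : J ≃ J) :
    Matchable K (S.map π.symm.toEmbedding) (A ∘ π) ↔ Matchable K S A := by
  refine ⟨fun h => ?_, Matchable.comp π⟩
  have := h.comp π.symm
  rw [Finset.map_map] at this
  convert this using 1
  · ext; simp
  · ext; simp

omit [Fintype J] [Fintype R] [DecidableEq V] in
lemma stuck_comp_of {A : J → Finset V} (π : J ≃ J) {j : J} (h : π j ∈ stuck K k ord A) :
    j ∈ stuck K k ord (A ∘ π) := by
  obtain ⟨h1, S, h2, h3, h4⟩ := h
  refine ⟨h1, S.map π.symm.toEmbedding, ?_, h3.comp π, ?_⟩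
  · intro s hs
    obtain ⟨s', hs', rfl⟩ := Finset.mem_map.1 hs
    simpa using h2 s' hs'
  · rw [← matchable_comp π, Finset.map_insert] at h4
    simpa using h4

omit [Fintype R] [DecidableEq V] in
lemma mem_lab_comp {A : J → Finset V} (π : J ≃ J) (j : J) :
    j ∈ lab K k ord (A ∘ π) ↔ π j ∈ lab K k ord A := by
  have h1 : (∃ j, k + 2 ≤ ((A ∘ π) j).card) ↔ ∃ j, k + 2 ≤ (A j).card :=
    π.exists_congr_left.trans (by simp)
  unfold lab
  simp only [h1]
  split_ifs
  · rfl
  · refine ⟨fun h => ?_, stuck_comp_of π⟩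
    have : A = (A ∘ π) ∘ π.symm := by ext; simp
    rw [this]
    exact stuck_comp_of π.symm (by simpa using h)

omit [Fintype J] [Fintype R] [DecidableEq V] in
lemma stuck_mono {A B : J → Finset V} (hAB : A ≤ B) (hB : ∀ j, (B j).card ≤ k + 1) :
    stuck K k ord A ⊆ stuck K k ord B := by
  have h : ∀ j, k + 1 ≤ (A j).card → A j = B j := fun j hj =>
    Finset.eq_of_subset_of_card_le (hAB j) ((hB j).trans hj)
  rintro j ⟨h1, S, h2, h3, h4⟩
  refine ⟨h j h1 ▸ h1, S, fun s hs => ?_, ?_, ?_⟩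
  · rw [← h s (h2 s hs).1, ← h j h1]
    exact h2 s hs
  · exact (matchable_congr fun s hs => h s (h2 s hs).1).1 h3
  · rwa [← matchable_congr fun s hs => ?_]
    rcases Finset.mem_insert.1 hs with rfl | hs
    · exact h _ h1
    · exact h s (h2 s hs).1

omit [DecidableEq V] in
/-- If all the sets of a tuple have at most `k + 1` elements and matching never gets stuck, then
the whole tuple can be matched. -/
lemma exists_match (hcard : Fintype.card J = Fintype.card R)
    (hsmall : ∀ i, ∀ A : Finset V, A.card ≤ k → A ∈ K i) (hord : Function.Injective ord)
    {B : J → Finset V} (hdisj : ∀ i j, i ≠ j → Disjoint (B i) (B j))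
    (hst : stuck K k ord B = ∅) : ∃ σ : R ≃ J, ∀ i, B (σ i) ∈ K i := by
  classical
  have key : ∀ S : Finset J, (∀ s ∈ S, k + 1 ≤ (B s).card) → Matchable K S B := by
    intro S
    induction S using Finset.strongInduction with
    | H S ih =>
      intro hS
      rcases S.eq_empty_or_nonempty with rfl | hne
      · by_cases hR : Nonempty R
        · exact ⟨fun _ => hR.some, by simp, by simp⟩
        · have hJ : IsEmpty J := by
            rw [← Fintype.card_eq_zero_iff, hcard, Fintype.card_eq_zero_iff]
            exact not_nonempty_iff.1 hR
          exact ⟨fun j => hJ.elim j, by simp, by simp⟩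
      obtain ⟨j, hj, hmax⟩ := S.exists_max_image (fun s => ord (B s)) hne
      by_contra hnot
      have : j ∈ stuck K k ord B := by
        refine ⟨hS j hj, S.erase j, fun s hs => ⟨hS s (Finset.mem_of_mem_erase hs), ?_⟩,
          ih _ (Finset.erase_ssubset hj) fun s hs => hS s (Finset.mem_of_mem_erase hs), ?_⟩
        · refine lt_of_le_of_ne (hmax s (Finset.mem_of_mem_erase hs)) fun h => ?_
          have h1 := hdisj s j (Finset.ne_of_mem_erase hs)
          rw [hord h, disjoint_self, Finset.bot_eq_empty] at h1
          have := hS j hj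
          simp [h1] at this
        · rwa [Finset.insert_erase hj]
      rw [hst] at this
      exact this
  obtain ⟨μ, h1, h2⟩ := key (Finset.univ.filter fun s => k + 1 ≤ (B s).card) (by simp)
  obtain ⟨g, hg⟩ := Finset.exists_equiv_extend_of_card_eq (t := (Finset.univ : Finset R))
    (by simpa using hcard) (Finset.subset_univ _) h1
  let e : J ≃ R := g.trans (Equiv.subtypeUnivEquiv (by simp))
  have he : ∀ j, e j = (g j : R) := fun j => rfl
  refine ⟨e.symm, fun i => ?_⟩
  obtain ⟨j, rfl⟩ := e.surjective i
  rw [Equiv.symm_apply_apply]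
  by_cases hj : k + 1 ≤ (B j).card
  · have hj' : j ∈ Finset.univ.filter fun s => k + 1 ≤ (B s).card := by simpa using hj
    rw [he, hg j hj']
    exact h2 j hj'
  · exact hsmall _ _ (by omega)

omit [DecidableEq V] in
/-- Some index is neither oversized in `B` nor stuck in `A`. By collective unavoidability Hall's
condition fails for the complements of the complexes, and the deficient set of indices contains
such an index. -/
lemma exists_not_stuck (hcard : Fintype.card J = Fintype.card R)
    (hcomplex : ∀ i, ∀ A ∈ K i, ∀ B ⊆ A, B ∈ K i)
    (hbig : ∀ i, ∀ A ∈ K i, A.card ≤ k + 1)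
    (hunav : ∀ A : R → Finset V, (∀ i j, i ≠ j → Disjoint (A i) (A j)) → ∃ i, A i ∈ K i)
    {A B : J → Finset V} (hAB : A ≤ B) (hdisj : ∀ i j, i ≠ j → Disjoint (B i) (B j)) :
    ∃ j, (B j).card ≤ k + 1 ∧ j ∉ stuck K k ord A := by
  classical
  have hall : ¬ ∀ s : Finset J, s.card ≤
      (s.biUnion fun j => Finset.univ.filter fun i => B j ∉ K i).card := by
    rw [Finset.all_card_le_biUnion_card_iff_exists_injective]
    rintro ⟨f, hf, hf2⟩
    obtain ⟨e, rfl⟩ : ∃ e : J ≃ R, ⇑e = f :=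
      ⟨Equiv.ofBijective f ((Fintype.bijective_iff_injective_and_card f).2 ⟨hf, hcard⟩), rfl⟩
    obtain ⟨i, hi⟩ := hunav (B ∘ e.symm) fun i j hij => hdisj _ _ (e.symm.injective.ne hij)
    have := hf2 (e.symm i)
    simp at this
    exact this hi
  push Not at hall
  obtain ⟨S₀, hS₀⟩ := hall
  set N := S₀.biUnion fun j => Finset.univ.filter fun i => B j ∉ K i with hN
  have hI : ∀ i, i ∉ N → ∀ j ∈ S₀, B j ∈ K i := by
    intro i hi j hj
    by_contra h
    exact hi (Finset.mem_biUnion.2 ⟨j, hj, by simpa using h⟩)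
  have hNc := Finset.card_compl N
  have hSc := Finset.card_compl S₀
  have hSr : S₀.card ≤ Fintype.card J := Finset.card_le_univ S₀
  have hlt : S₀ᶜ.card < Nᶜ.card := by omega
  obtain ⟨i₀, hi₀⟩ : Nᶜ.Nonempty := Finset.card_pos.1 (by omega)
  by_contra! hcon
  have hst : ∀ j ∈ S₀, j ∈ stuck K k ord A := fun j hj =>
    hcon j (hbig _ _ (hI i₀ (by simpa using hi₀) j hj))
  obtain ⟨j, hj, hmin⟩ := S₀.exists_min_image (fun s => ord (A s)) (Finset.card_pos.1 (by omega))
  obtain ⟨-, S, h2, ⟨μ, h3, h4⟩, h5⟩ := hst j hj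
  have hjS : j ∉ S := fun h => lt_irrefl _ (h2 j h).2
  -- every complex outside `N` is used for `S`, as it could otherwise be used for `j`
  have hsub : Nᶜ ⊆ S.image μ := by
    intro i hi
    by_contra hiS
    refine h5 ⟨Function.update μ j i, ?_, ?_⟩
    · have hu : ∀ s ∈ S, Function.update μ j i s = μ s := fun s hs =>
        Function.update_of_ne (by rintro rfl; exact hjS hs) _ _
      rw [Finset.coe_insert, Set.injOn_insert (by simpa using hjS)]
      refine ⟨fun s hs s' hs' h => h3 hs hs' ?_, ?_⟩
      · rwa [hu s hs, hu s' hs'] at h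
      · rintro ⟨s, hs, h⟩
        rw [hu s hs, Function.update_self] at h
        exact hiS (Finset.mem_image.2 ⟨s, hs, h⟩)
    · intro s hs
      rcases eq_or_ne s j with rfl | hsj
      · rw [Function.update_self]
        exact hcomplex _ _ (hI i (by simpa using hi) s hj) _ (hAB s)
      · rw [Function.update_of_ne hsj]
        exact h4 s (Finset.mem_of_mem_insert_of_ne hs hsj)
  have hdis : S ⊆ S₀ᶜ := by
    intro s hs
    rw [Finset.mem_compl]
    intro hs0
    exact absurd (h2 s hs).2 (not_lt.2 (hmin s hs0))
  have h6 := (Finset.card_le_card hsub).trans Finset.card_image_le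
  have h7 := Finset.card_le_card hdis
  omega

omit [DecidableEq V] in
/-- The labels of a chain of tuples below `B` do not exhaust all indices. -/
lemma exists_not_lab (hcard : Fintype.card J = Fintype.card R)
    (hcomplex : ∀ i, ∀ A ∈ K i, ∀ B ⊆ A, B ∈ K i)
    (hbig : ∀ i, ∀ A ∈ K i, A.card ≤ k + 1)
    (hunav : ∀ A : R → Finset V, (∀ i j, i ≠ j → Disjoint (A i) (A j)) → ∃ i, A i ∈ K i)
    {B : J → Finset V} (hdisj : ∀ i j, i ≠ j → Disjoint (B i) (B j))
    (C : Finset (J → Finset V)) (hC : ∀ A ∈ C, ∀ A' ∈ C, A ≤ A' ∨ A' ≤ A) (hCB : ∀ A ∈ C, A ≤ B) :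
    ∃ j, ∀ A ∈ C, j ∉ lab K k ord A := by
  classical
  obtain ⟨A₀, hA₀, hmax⟩ : ∃ A₀ ≤ B, ∀ A ∈ C, (∀ j, (A j).card ≤ k + 1) →
      A ≤ A₀ ∧ ∀ j, (A₀ j).card ≤ k + 1 := by
    rcases (C.filter fun A => ∀ j, (A j).card ≤ k + 1).eq_empty_or_nonempty with h | h
    · refine ⟨B, le_rfl, fun A hA hA' => ?_⟩
      have : A ∈ C.filter fun A => ∀ j, (A j).card ≤ k + 1 := by simpa using ⟨hA, hA'⟩
      rw [h] at this
      simp at this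
    · obtain ⟨A₀, hA₀⟩ := Finset.exists_maximal h
      have hm := hA₀.prop
      rw [Finset.mem_filter] at hm
      refine ⟨A₀, hCB _ hm.1, fun A hA hA' => ⟨?_, hm.2⟩⟩
      rcases hC A hA A₀ hm.1 with h1 | h1
      · exact h1
      · exact hA₀.le_of_ge (Finset.mem_filter.2 ⟨hA, hA'⟩) h1
  obtain ⟨j, hj, hj2⟩ := exists_not_stuck (ord := ord) hcard hcomplex hbig hunav hA₀ hdisj
  refine ⟨j, fun A hA => ?_⟩
  unfold lab
  split_ifs with h
  · have := Finset.card_le_card (hCB A hA j)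
    simp
    omega
  · push Not at h
    obtain ⟨h1, h2⟩ := hmax A hA fun j => by have := h j; omega
    exact fun h3 => hj2 (stuck_mono h1 h2 h3)

end labels

end Tverberg

/-! ### The test function -/

namespace Tverberg

section test

variable {J R V : Type*} [Fintype J] [Fintype R] [DecidableEq J] [DecidableEq V] [Fintype V]

/-- For nonnegative `x`, a weight that is positive exactly when `A` is a superlevel set, consisting of
positive values, of `x`. -/
noncomputable def wt (A : J → Finset V) (x : J → V → ℝ) : ℝ :=
  ∏ j, ∏ v, if v ∈ A j then x j v * ∏ j', ∏ v', if v' ∈ A j' then 1 else max 0 (x j v - x j' v')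
    else 1

omit [DecidableEq J] in
lemma wt_comp (A : J → Finset V) (x : J → V → ℝ) (π : J ≃ J) : wt (A ∘ π) (x ∘ π) = wt A x := by
  unfold wt
  conv_rhs => rw [← Equiv.prod_comp π]
  refine Finset.prod_congr rfl fun j _ => Finset.prod_congr rfl fun v _ => ?_
  rw [← Equiv.prod_comp π fun j' => ∏ v', if v' ∈ A j' then 1 else max 0 (x (π j) v - x j' v')]
  rfl

omit [DecidableEq J] in
lemma wt_continuous (A : J → Finset V) : Continuous (wt A) := by
  unfold wt
  refine continuous_finsetProd _ fun j _ => continuous_finsetProd _ fun v _ => ?_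
  split_ifs
  · refine Continuous.mul (by fun_prop) ?_
    refine continuous_finsetProd _ fun j' _ => continuous_finsetProd _ fun v' _ => ?_
    split_ifs
    · exact continuous_const
    · fun_prop
  · exact continuous_const

omit [DecidableEq J] in
lemma wt_nonneg (A : J → Finset V) {x : J → V → ℝ} (hx : ∀ j v, 0 ≤ x j v) : 0 ≤ wt A x := by
  refine Finset.prod_nonneg fun j _ => Finset.prod_nonneg fun v _ => ?_
  split_ifs
  · refine mul_nonneg (hx j v) ?_
    refine Finset.prod_nonneg fun j' _ => Finset.prod_nonneg fun v' _ => ?_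
    split_ifs
    · exact zero_le_one
    · exact le_max_left _ _
  · exact zero_le_one

omit [DecidableEq J] in
lemma wt_ne_zero {A : J → Finset V} {x : J → V → ℝ} (h : wt A x ≠ 0) {j : J} {v : V}
    (hv : v ∈ A j) : x j v ≠ 0 ∧ ∀ j' v', v' ∉ A j' → x j' v' < x j v := by
  have h1 := Finset.prod_ne_zero_iff.1 (Finset.prod_ne_zero_iff.1 h j (Finset.mem_univ _)) v
    (Finset.mem_univ _)
  rw [if_pos hv] at h1
  refine ⟨left_ne_zero_of_mul h1, fun j' v' hv' => ?_⟩
  have h2 := Finset.prod_ne_zero_iff.1 (Finset.prod_ne_zero_iff.1 (right_ne_zero_of_mul h1) j'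
    (Finset.mem_univ _)) v' (Finset.mem_univ _)
  rw [if_neg hv'] at h2
  by_contra! h3
  exact h2 (max_eq_left (by linarith))

omit [DecidableEq J] in
lemma wt_supp_ne_zero {A : J → Finset V} {x : J → V → ℝ} (hx : ∀ j v, 0 ≤ x j v)
    (hA : ∀ j v, v ∈ A j ↔ x j v ≠ 0) : wt A x ≠ 0 := by
  refine Finset.prod_ne_zero_iff.2 fun j _ => Finset.prod_ne_zero_iff.2 fun v _ => ?_
  split_ifs with h
  · refine mul_ne_zero ((hA j v).1 h) ?_
    refine Finset.prod_ne_zero_iff.2 fun j' _ => Finset.prod_ne_zero_iff.2 fun v' _ => ?_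
    split_ifs with h'
    · exact one_ne_zero
    · have h1 : x j' v' = 0 := by simpa using (hA j' v').not.1 h'
      have h2 := ((hA j v).1 h).lt_of_le' (hx j v)
      rw [h1, sub_zero, max_eq_right h2.le]
      exact h2.ne'
  · exact one_ne_zero

/-- A continuous equivariant test function detecting whether the support of a system of weights can
be matched to the complexes. -/
theorem exists_test {K : R → Set (Finset V)} {k : ℕ} (hcard : Fintype.card J = Fintype.card R)
    (hcomplex : ∀ i, ∀ A ∈ K i, ∀ B ⊆ A, B ∈ K i)
    (hsmall : ∀ i, ∀ A : Finset V, A.card ≤ k → A ∈ K i)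
    (hbig : ∀ i, ∀ A ∈ K i, A.card ≤ k + 1)
    (hunav : ∀ A : R → Finset V, (∀ i j, i ≠ j → Disjoint (A i) (A j)) → ∃ i, A i ∈ K i) :
    ∃ T : (J → V → ℝ) → J → ℝ, (∀ j, Continuous fun x => T x j) ∧
      (∀ (π : J ≃ J) x j, T (x ∘ π) j = T x (π j)) ∧
      ∀ x : J → V → ℝ, (∀ j v, 0 ≤ x j v) → (∀ j j' v, x j v ≠ 0 → x j' v ≠ 0 → j = j') →
        (∀ j j', T x j = T x j') →
        ∃ (A : J → Finset V) (σ : R ≃ J), (∀ j v, v ∈ A j ↔ x j v ≠ 0) ∧ ∀ i, A (σ i) ∈ K i := by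
  classical
  let ord : Finset V → ℕ := fun s => (Fintype.equivFin (Finset V) s : ℕ)
  have hord : Function.Injective ord := Fin.val_injective.comp (Fintype.equivFin _).injective
  refine ⟨fun x j => ∑ A : J → Finset V, if j ∈ lab K k ord A then wt A x else 0, ?_, ?_, ?_⟩
  · intro j
    refine continuous_finsetSum _ fun A _ => ?_
    split_ifs
    · exact wt_continuous A
    · exact continuous_const
  · intro π x j
    beta_reduce
    rw [← Equiv.sum_comp (π.symm.arrowCongr (Equiv.refl (Finset V)))]
    refine Finset.sum_congr rfl fun A _ => ?_
    have h1 : (π.symm.arrowCongr (Equiv.refl (Finset V))) A = A ∘ π := by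
      ext; simp
    rw [h1, wt_comp]
    simp only [mem_lab_comp]
  · intro x hx hcol hconst
    let B : J → Finset V := fun j => Finset.univ.filter fun v => x j v ≠ 0
    have hB : ∀ j v, v ∈ B j ↔ x j v ≠ 0 := by simp [B]
    have hdisj : ∀ i j, i ≠ j → Disjoint (B i) (B j) := by
      intro i j hij
      rw [Finset.disjoint_left]
      intro v hv hv'
      exact hij (hcol i j v ((hB _ _).1 hv) ((hB _ _).1 hv'))
    refine ⟨B, ?_⟩
    suffices h : lab K k ord B = ∅ by
      have h1 : ¬ ∃ j, k + 2 ≤ (B j).card := by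
        rintro ⟨j, hj⟩
        have : j ∈ lab K k ord B := by
          rw [lab, if_pos ⟨j, hj⟩]
          exact hj
        rw [h] at this
        exact this
      rw [lab, if_neg h1] at h
      obtain ⟨σ, hσ⟩ := exists_match hcard hsmall hord hdisj h
      exact ⟨σ, hB, hσ⟩
    rw [Set.eq_empty_iff_forall_notMem]
    intro j₀ hj₀
    obtain ⟨j, hj⟩ := exists_not_lab (ord := ord) hcard hcomplex hbig hunav hdisj
      (Finset.univ.filter fun A => wt A x ≠ 0)
      (by
        -- superlevel sets form a chain
        intro A hA A' hA'
        simp only [Finset.mem_filter, Finset.mem_univ, true_and] at hA hA'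
        by_contra! h
        obtain ⟨h1, h2⟩ := h
        simp only [Pi.le_def, Finset.not_subset, not_forall] at h1 h2
        obtain ⟨i, v, hv, hv'⟩ := h1
        obtain ⟨i', w, hw, hw'⟩ := h2
        exact lt_asymm ((wt_ne_zero hA hv).2 i' w hw') ((wt_ne_zero hA' hw).2 i v hv'))
      (fun A hA i v hv => (hB i v).2 (wt_ne_zero (by simpa using hA) hv).1)
    have h0 : ∑ A : J → Finset V, (if j ∈ lab K k ord A then wt A x else 0) = 0 := by
      refine Finset.sum_eq_zero fun A _ => ?_
      split_ifs with h
      · by_contra hne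
        exact hj A (by simpa using hne) h
      · rfl
    have h1 := (hconst j j₀).symm.trans h0
    beta_reduce at h1
    rw [Finset.sum_eq_zero_iff_of_nonneg] at h1
    · have := h1 B (Finset.mem_univ _)
      rw [if_pos hj₀] at this
      exact wt_supp_ne_zero hx hB this
    · intro A _
      split_ifs
      · exact wt_nonneg A hx
      · exact le_rfl

end test

end Tverberg

/-! ### The Tverberg theorem -/

namespace Tverberg

section assembly

variable {m d : ℕ}

/-- Tietze extension, coordinatewise. -/
lemma exists_extension (f : stdSimplex ℝ (Fin m) → EuclideanSpace ℝ (Fin d)) (hf : Continuous f) :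
    ∃ f' : Fin d → (Fin m → ℝ) → ℝ, (∀ l, Continuous (f' l)) ∧
      ∀ l (x : stdSimplex ℝ (Fin m)), f' l x = f x l := by
  have h : ∀ l : Fin d, ∃ g : C(Fin m → ℝ, ℝ), ∀ x : stdSimplex ℝ (Fin m), g x = f x l := by
    intro l
    obtain ⟨g, hg⟩ := ContinuousMap.exists_restrict_eq (isClosed_stdSimplex ℝ (Fin m))
      (⟨fun x => f x l, by fun_prop⟩ : C(stdSimplex ℝ (Fin m), ℝ))
    exact ⟨g, fun x => DFunLike.congr_fun hg x⟩
  choose g hg using h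
  exact ⟨fun l => g l, fun l => (g l).continuous, hg⟩

variable {p ν : ℕ} [NeZero p]

/-- If fewer rows than labels are available, then a point of the join whose weights in these rows
have the same sum for every label vanishes on them. -/
lemma eq_zero_of_const {ι : Type*} [Fintype ι] {n : ℕ} (hn : n < p ^ ν) {x : ι → G ν p → ℝ}
    (hx : x ∈ joinSet ν p ι) (e : Fin n → ι) (h : ∀ g g', ∑ i, x (e i) g = ∑ i, x (e i) g')
    (i : Fin n) (g : G ν p) : x (e i) g = 0 := by
  obtain ⟨g₀, hg₀⟩ : ∃ g₀, ∀ i, x (e i) g₀ = 0 := by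
    by_contra! hcon
    choose c hc using hcon
    have hinj : Function.Injective c := fun g g' hgg =>
      hx.2.2 (e (c g)) g g' (hc g) (by rw [hgg]; exact hc g')
    have := Fintype.card_le_of_injective c hinj
    simp [ZMod.card] at this
    omega
  have h0 : ∑ i, x (e i) g = 0 := by
    rw [h g g₀]
    exact Finset.sum_eq_zero fun i _ => hg₀ i
  exact (Finset.sum_eq_zero_iff_of_nonneg fun i _ => hx.1 _ _).1 h0 i (Finset.mem_univ i)

end assembly

end Tverberg

open Tverberg in
/-- **Tverberg theorem for collectively unavoidable complexes.** -/
theorem tverberg_collectively_unavoidable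
    (p ν r d k N m : ℕ) (hp : p.Prime) (hν : 0 < ν) (hr : r = p ^ ν)
    (hd : 1 ≤ d)
    (hN : N = (r - 1) * (d + 2))
    (hm : m = N + 1)
    (K : Fin r → Set (Finset (Fin m)))
    (hcomplex : ∀ i, IsSimplicialComplex (K i))
    (hbal : ∀ i, IsBalanced k (K i))
    (hunav : CollectivelyRUnavoidable r K)
    (f : stdSimplex ℝ (Fin m) → EuclideanSpace ℝ (Fin d)) (hf : Continuous f) :
    ∃ Δ : Fin r → Finset (Fin m),
      (∀ i j, i ≠ j → Disjoint (Δ i) (Δ j)) ∧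
      (∀ i, Δ i ∈ K i) ∧
      (⋂ i, f '' simplexFace (Δ i)).Nonempty := by
  classical
  have : Fact p.Prime := ⟨hp⟩
  have hr0 : 0 < r := hr ▸ pow_pos hp.pos ν
  have hcardG : Fintype.card (G ν p) = r := by simp [ZMod.card, hr]
  obtain ⟨f', hf'c, hf'⟩ := exists_extension f hf
  obtain ⟨T, hTc, hTe, hT⟩ := exists_test (J := G ν p) (R := Fin r) (K := K) (k := k)
    (by rw [hcardG, Fintype.card_fin]) hcomplex (fun i => (hbal i).1) (fun i => (hbal i).2) hunav
  let L := Option (Option (Fin d))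
  let ι := Fin m ⊕ (L × Fin (r - 1))
  -- the part of a point of the join that encodes `r` weighted points of the simplex
  let y : (ι → G ν p → ℝ) → G ν p → Fin m → ℝ := fun x g v => x (Sum.inl v) g
  let F : L → (ι → G ν p → ℝ) → G ν p → ℝ := fun l x g =>
    match l with
    | none => ∑ v, y x g v
    | some none => T (y x) g
    | some (some l) => f' l ((r : ℝ) • y x g)
  let E : L → (ι → G ν p → ℝ) → G ν p → ℝ := fun l x g => ∑ i, x (Sum.inr (l, i)) g
  have hyc : Continuous y := by
    refine continuous_pi fun g => continuous_pi fun v => ?_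
    fun_prop
  have hys : ∀ h x, y (shift h x) = y x ∘ Equiv.subRight h := fun h x => rfl
  have hFc : ∀ l g, Continuous fun x => F l x g := by
    rintro (_ | _ | l) g
    · simp only [F, y]; fun_prop
    · exact (hTc g).comp hyc
    · have h : Continuous fun x => y x g := (continuous_apply g).comp hyc
      have h' : Continuous fun x => (r : ℝ) • y x g := by
        refine continuous_pi fun v => ?_
        exact ((continuous_apply v).comp h).const_mul (r : ℝ)
      exact (hf'c l).comp h'
  have hFs : ∀ l h x g, F l (shift h x) g = F l x (g - h) := by
    rintro (_ | _ | l) h x g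
    · rfl
    · exact (congrArg (fun w => T w g) (hys h x)).trans (hTe _ _ _)
    · rfl
  obtain ⟨x, hx, hconst⟩ := join_borsuk_ulam (p := p) (ν := ν) (ι := ι) (L := L)
    (by
      simp only [ι, L, Fintype.card_sum, Fintype.card_prod, Fintype.card_fin, Fintype.card_option]
      rw [hm, hN, hr]
      ring)
    (fun l x g => ⟨F l x g, E l x g⟩)
    (fun l g => by
      have h1 := hFc l g
      have h2 : Continuous fun x => E l x g := by simp only [E]; fun_prop
      simp only [Complex.mk_eq_add_mul_I]
      fun_prop)
    (fun l h x g => by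
      rw [hFs]
      rfl)
  have hF : ∀ l g g', F l x g = F l x g' := fun l g g' => congrArg Complex.re (hconst l g g')
  have hE : ∀ l g g', E l x g = E l x g' := fun l g g' => congrArg Complex.im (hconst l g g')
  have hextra : ∀ l i g, x (Sum.inr (l, i)) g = 0 := fun l i g =>
    eq_zero_of_const (n := r - 1) (by omega) hx (fun i => Sum.inr (l, i)) (hE l) i g
  have hy0 : ∀ g v, 0 ≤ y x g v := fun g v => hx.1 _ _
  have hsum : ∀ g, (r : ℝ) * ∑ v, y x g v = 1 := by
    intro g
    have h1 : ∑ g, ∑ v, y x g v = 1 := by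
      rw [← hx.2.1, Fintype.sum_sum_type, Finset.sum_comm]
      simp [hextra, y]
    have h2 : ∀ g', ∑ v, y x g' v = ∑ v, y x g v := fun g' => hF none g' g
    rw [Finset.sum_congr rfl fun g' _ => h2 g'] at h1
    simpa [hcardG, ZMod.card, hr] using h1
  let z : G ν p → stdSimplex ℝ (Fin m) := fun g => ⟨(r : ℝ) • y x g,
    fun v => mul_nonneg (Nat.cast_nonneg r) (hy0 g v), by
      simp only [Pi.smul_apply, smul_eq_mul, ← Finset.mul_sum, hsum]⟩
  have hfz : ∀ g, f (z g) = f (z 0) := by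
    intro g
    ext l
    rw [← hf', ← hf']
    exact hF (some (some l)) g 0
  obtain ⟨A, σ, hA, hAK⟩ := hT (y x) hy0 (fun g g' v => hx.2.2 (Sum.inl v) g g')
    (hF (some none))
  refine ⟨fun i => A (σ i), fun i j hij => ?_, hAK, f (z 0), ?_⟩
  · rw [Finset.disjoint_left]
    intro v hv hv'
    exact hij (σ.injective (hx.2.2 (Sum.inl v) _ _ ((hA _ _).1 hv) ((hA _ _).1 hv')))
  · refine Set.mem_iInter.2 fun i => ⟨z (σ i), ?_, hfz _⟩
    intro v hv
    refine Finset.mem_coe.2 ((hA _ _).2 fun h0 => hv ?_)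
    change (r : ℝ) * y x (σ i) v = 0
    rw [h0, mul_zero]
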